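/- arXiv:math/9302207 — 3 statements merged into one kernel-verified Lean document; each statement's English description precedes it below -/
import Mathlib

section
/- There is an absolute constant c₀ such that for every n ∈ ℕ and every bounded linear operator T : X → Y between real Banach spaces of rank at most n which is absolutely (2,1)-summing, one has π_1(T) ≤ c₀ · (n(1 + ln n))^{1/2} · π_{2,1}(T). -/
open scoped ENNReal NNReal BigOperators

noncomputable section

/-- The `ℓ_p`-sum `(∑ i, f i ^ p) ^ (1/p)` of a finite family in `ℝ≥0∞`,
with the usual sup-modification for `p = ∞`. -/
def eSum (p : ℝ≥0∞) {ι : Type*} [Fintype ι] (f : ι → ℝ≥0∞) : ℝ≥0∞ :=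
  if p = ∞ then ⨆ i, f i else (∑ i, f i ^ p.toReal) ^ (1 / p.toReal)

/-- The weak `ℓ_q`-norm of a finite family of vectors:
`sup { (∑ k |⟨x_k, x*⟩|^q)^(1/q) : x* in the unit ball of the dual }`. -/
def weakLq (q : ℝ≥0∞) {X : Type*} [NormedAddCommGroup X] [NormedSpace ℝ X]
    {n : ℕ} (x : Fin n → X) : ℝ≥0∞ :=
  ⨆ f : {f : X →L[ℝ] ℝ // ‖f‖ ≤ 1}, eSum q fun k => ENNReal.ofReal |f.1 (x k)|

/-- The `(p,q)`-summing norm of `T` with respect to `n` vectors. -/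
def piN (p q : ℝ≥0∞) {X Y : Type*} [NormedAddCommGroup X] [NormedSpace ℝ X]
    [NormedAddCommGroup Y] [NormedSpace ℝ Y] (n : ℕ) (T : X →L[ℝ] Y) : ℝ≥0∞ :=
  ⨆ x : {x : Fin n → X // weakLq q x ≤ 1}, eSum p fun k => ENNReal.ofReal ‖T (x.1 k)‖

/-- The `(p,q)`-summing norm of `T`. -/
def piPQ (p q : ℝ≥0∞) {X Y : Type*} [NormedAddCommGroup X] [NormedSpace ℝ X]
    [NormedAddCommGroup Y] [NormedSpace ℝ Y] (T : X →L[ℝ] Y) : ℝ≥0∞ :=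
  ⨆ n : ℕ, piN p q n T

/-- `T` has rank at most `n`: its range is a finite-dimensional subspace of
dimension at most `n`. -/
def RankLE {X Y : Type*} [NormedAddCommGroup X] [NormedSpace ℝ X]
    [NormedAddCommGroup Y] [NormedSpace ℝ Y] (T : X →L[ℝ] Y) (n : ℕ) : Prop :=
  FiniteDimensional ℝ (LinearMap.range (T : X →ₗ[ℝ] Y)) ∧
    Module.finrank ℝ (LinearMap.range (T : X →ₗ[ℝ] Y)) ≤ n

/-- The average of `‖∑ k, ε k • x k‖²` over all `2^n` sign choices `ε ∈ {-1,1}^n`. -/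
def radAvg {X : Type*} [NormedAddCommGroup X] [NormedSpace ℝ X] {n : ℕ}
    (x : Fin n → X) : ℝ :=
  (∑ ε : Fin n → Bool, ‖∑ k, (if ε k then (1 : ℝ) else -1) • x k‖ ^ 2) / 2 ^ n

/-- The Rademacher cotype `q` constant of `T` with respect to `n` vectors. -/
def cotypeN (q : ℝ) {X Y : Type*} [NormedAddCommGroup X] [NormedSpace ℝ X]
    [NormedAddCommGroup Y] [NormedSpace ℝ Y] (n : ℕ) (T : X →L[ℝ] Y) : ℝ≥0∞ :=
  ⨆ x : {x : Fin n → X // Real.sqrt (radAvg x) ≤ 1},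
    (∑ k, ENNReal.ofReal ‖T (x.1 k)‖ ^ q) ^ (1 / q)

/-- The Rademacher cotype `q` constant of `T`. -/
def cotype (q : ℝ) {X Y : Type*} [NormedAddCommGroup X] [NormedSpace ℝ X]
    [NormedAddCommGroup Y] [NormedSpace ℝ Y] (T : X →L[ℝ] Y) : ℝ≥0∞ :=
  ⨆ n : ℕ, cotypeN q n T



lemma design_matrix {m d : ℕ} (hd : 0 < d) (W : Matrix (Fin m) (Fin d) ℝ)
    (hW : Function.Injective W.mulVec) :
    ∃ (p : Fin m → ℝ) (Q : Matrix (Fin m) (Fin m) ℝ), p ∈ stdSimplex ℝ (Fin m) ∧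
      Q.transpose = Q ∧ Q * Matrix.diagonal p * Q = Q ∧ Q * Matrix.diagonal p * W = W ∧
      ∀ k, Q k k ≤ 2 * d := by
  classical
  set M : (Fin m → ℝ) → Matrix (Fin d) (Fin d) ℝ :=
    fun p => W.transpose * Matrix.diagonal p * W with hM
  have hm : 0 < m := by
    rcases Nat.eq_zero_or_pos m with rfl | h
    · exfalso
      have := @hW (fun _ => 1) (fun _ => 0) (Subsingleton.elim _ _)
      have := congrFun this ⟨0, hd⟩
      simp at this
    · exact h
  have hmR : (0:ℝ) < m := by exact_mod_cast hm
  have hcont : Continuous fun p => (M p).det := by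
    apply Continuous.matrix_det
    simp only [hM]
    fun_prop
  have hu : (fun _ => (1:ℝ)/m) ∈ stdSimplex ℝ (Fin m) := by
    refine ⟨fun _ => by positivity, ?_⟩
    simp; field_simp
  obtain ⟨p, hp, hmax⟩ := (isCompact_stdSimplex ℝ (Fin m)).exists_isMaxOn ⟨_, hu⟩ hcont.continuousOn
  have hpos : 0 < (M p).det := by
    refine lt_of_lt_of_le ?_ (hmax hu)
    have h1 : M (fun _ => (1:ℝ)/m) = ((1:ℝ)/m) • (W.conjTranspose * W) := by
      simp only [hM]
      have : Matrix.diagonal (fun _ : Fin m => (1:ℝ)/m) = ((1:ℝ)/m) • (1 : Matrix (Fin m) (Fin m) ℝ) := by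
        rw [Matrix.smul_one_eq_diagonal]
      rw [this]; simp
    show 0 < (M (fun _ => (1:ℝ)/m)).det
    rw [h1, Matrix.det_smul]
    have := (Matrix.PosDef.conjTranspose_mul_self W hW).det_pos
    positivity
  have hunit : IsUnit (M p).det := hpos.ne'.isUnit
  have hMT : (M p).transpose = M p := by
    simp [hM, Matrix.transpose_mul, Matrix.mul_assoc]
  refine ⟨p, W * (M p)⁻¹ * W.transpose, hp, ?_, ?_, ?_, ?_⟩
  · simp [Matrix.transpose_mul, Matrix.transpose_nonsing_inv, hMT, Matrix.mul_assoc]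
  · calc W * (M p)⁻¹ * W.transpose * Matrix.diagonal p * (W * (M p)⁻¹ * W.transpose)
        = W * ((M p)⁻¹ * (M p)) * (M p)⁻¹ * W.transpose := by simp only [hM, Matrix.mul_assoc]
      _ = _ := by rw [Matrix.nonsing_inv_mul _ hunit, Matrix.mul_one]
  · calc W * (M p)⁻¹ * W.transpose * Matrix.diagonal p * W
        = W * ((M p)⁻¹ * (M p)) := by simp only [hM, Matrix.mul_assoc]
      _ = _ := by rw [Matrix.nonsing_inv_mul _ hunit, Matrix.mul_one]
  · intro k
    set κ := (W * (M p)⁻¹ * W.transpose) k k with hκ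
    have hdR : (1:ℝ) ≤ d := by exact_mod_cast hd
    set t : ℝ := 1 / (2 * d) with ht
    have ht0 : 0 < t := by positivity
    have ht1 : t ≤ 1/2 := by
      rw [ht, div_le_div_iff₀ (by positivity) (by norm_num)]; linarith
    have hp' : (1 - t) • p + t • (Pi.single k 1 : Fin m → ℝ) ∈ stdSimplex ℝ (Fin m) :=
      convex_stdSimplex ℝ (Fin m) hp (single_mem_stdSimplex ℝ k) (by linarith) ht0.le (by ring)
    have hle : (M ((1 - t) • p + t • (Pi.single k 1 : Fin m → ℝ))).det ≤ (M p).det := hmax hp'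
    have hMp : M ((1 - t) • p + t • (Pi.single k 1 : Fin m → ℝ)) =
        (1 - t) • (M p + Matrix.replicateCol Unit ((t/(1-t)) • W k) * Matrix.replicateRow Unit (W k)) := by
      have h1t : (1 - t) ≠ 0 := by linarith
      have hent : ∀ q i j, M q i j = ∑ x, W x i * q x * W x j := by
        intro q i j
        simp only [hM]
        rw [Matrix.mul_apply]
        refine Finset.sum_congr rfl fun x _ => ?_
        rw [Matrix.mul_diagonal, Matrix.transpose_apply]
      ext i j
      rw [hent, Matrix.smul_apply, Matrix.add_apply, hent, Matrix.mul_apply]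
      simp only [
        Pi.add_apply, Pi.smul_apply, smul_eq_mul, Matrix.replicateCol_apply,
        Matrix.replicateRow_apply, Finset.univ_unique, Finset.sum_const, Finset.card_singleton, one_smul]
      have : ∀ x, W x i * ((1 - t) * p x + t * (Pi.single k 1 : Fin m → ℝ) x) * W x j =
        (1-t) * (W x i * p x * W x j) + (if x = k then t * W x i * W x j else 0) := by
        intro x
        by_cases hx : x = k
        · subst hx; simp; ring
        · simp [hx]; ring
      rw [Finset.sum_congr rfl fun x _ => this x, Finset.sum_add_distrib, ← Finset.mul_sum]
      simp
      field_simp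
    have hdet : (M ((1 - t) • p + t • (Pi.single k 1 : Fin m → ℝ))).det =
        (1-t)^d * ((M p).det * (1 + t/(1-t) * κ)) := by
      rw [hMp, Matrix.det_smul, Matrix.det_add_replicateCol_mul_replicateRow hunit]
      congr 2
      · simp
      · rw [Matrix.det_unique]
        simp only [Matrix.add_apply, Matrix.one_apply_eq, hκ]
        congr 1
        simp only [Matrix.mul_apply, Matrix.transpose_apply, Matrix.replicateCol_apply,
          Matrix.replicateRow_apply, Pi.smul_apply, smul_eq_mul, Finset.mul_sum]
        exact Finset.sum_congr rfl fun x _ => by ring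
    rw [hdet] at hle
    have hb : (1:ℝ)/2 ≤ (1 - t)^d := by
      have := one_add_mul_le_pow (a := -t) (by linarith) d
      have h2 : (1:ℝ) + d * -t = 1/2 := by rw [ht]; field_simp; norm_num
      rw [h2] at this
      simpa [sub_eq_add_neg] using this
    have h3 : (1-t)^d * (1 + t/(1-t) * κ) ≤ 1 := by
      have : (M p).det * ((1-t)^d * (1 + t/(1-t) * κ)) ≤ (M p).det * 1 := by linarith
      exact le_of_mul_le_mul_left this hpos
    by_contra hcon
    push Not at hcon
    have hκ1 : 1 < t * κ := by
      have : t * (2 * d) = 1 := by rw [ht]; field_simp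
      nlinarith
    have : 1 < t/(1-t) * κ := by
      rw [div_mul_eq_mul_div, lt_div_iff₀ (by linarith)]; linarith
    nlinarith

lemma design {m : ℕ} (G : Submodule ℝ (Fin m → ℝ)) :
    ∃ (c : Fin m → ℝ) (K : Fin m → Fin m → ℝ), (∀ k, 0 ≤ c k) ∧
      ∑ k, c k = Module.finrank ℝ G ∧ (∀ k i, |K k i| ≤ 2) ∧
      (∀ k, ∑ i, c i * K k i ^ 2 ≤ 2) ∧
      ∀ g ∈ G, ∀ k, g k = ∑ i, c i * K k i * g i := by
  classical
  set d := Module.finrank ℝ G with hd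
  rcases Nat.eq_zero_or_pos d with h0 | hpos
  · refine ⟨0, 0, by simp, by simp [h0], by simp, by simp, ?_⟩
    intro g hg k
    have : G = ⊥ := Submodule.finrank_eq_zero.mp (hd ▸ h0)
    rw [this, Submodule.mem_bot] at hg
    simp [hg]
  set b := Module.finBasis ℝ G with hb
  set W : Matrix (Fin m) (Fin d) ℝ := fun k j => (b j : Fin m → ℝ) k with hW
  have hWv : ∀ v, W.mulVec v = ((∑ j, v j • b j : G) : Fin m → ℝ) := by
    intro v; ext k
    simp [Matrix.mulVec, dotProduct, hW, mul_comm]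
  have hinj : Function.Injective W.mulVec := by
    intro v v' h
    rw [hWv, hWv] at h
    have h' := Subtype.ext h
    have := congrArg (fun g => (b.repr g : Fin d → ℝ)) h'
    exact (b.repr_sum_self v).symm.trans (this.trans (b.repr_sum_self v'))
  obtain ⟨p, Q, hp, hQT, hQQ, hQW, hQd⟩ := design_matrix hpos W hinj
  have hdR : (0:ℝ) < d := by exact_mod_cast hpos
  have hsym : ∀ i k, Q i k = Q k i := fun i k => by
    conv_lhs => rw [← hQT]
    rfl
  have hrep : ∀ k i, Q k i = ∑ j, p j * (Q k j * Q i j) := by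
    intro k i
    conv_lhs => rw [← hQQ]
    rw [Matrix.mul_apply]
    refine Finset.sum_congr rfl fun j _ => ?_
    rw [Matrix.mul_diagonal, hsym j i]; ring
  have habs : ∀ k i, |Q k i| ≤ 2 * d := by
    intro k i
    have h1 := hrep k k
    have h2 := hrep i i
    have h3 : |Q k i| ≤ (Q k k + Q i i) / 2 := by
      rw [hrep k i, h1, h2, ← Finset.sum_add_distrib, Finset.sum_div]
      refine (Finset.abs_sum_le_sum_abs _ _).trans (Finset.sum_le_sum fun j _ => ?_)
      rw [abs_mul, abs_of_nonneg (hp.1 j)]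
      have : |Q k j * Q i j| ≤ (Q k j * Q k j + Q i j * Q i j)/2 := by
        rw [abs_le]; constructor <;> nlinarith [sq_nonneg (Q k j + Q i j), sq_nonneg (Q k j - Q i j)]
      have := mul_le_mul_of_nonneg_left this (hp.1 j)
      linarith
    linarith [hQd k, hQd i]
  refine ⟨fun k => d * p k, fun k i => Q k i / d, fun k => mul_nonneg hdR.le (hp.1 k), ?_, ?_, ?_, ?_⟩
  · rw [← Finset.mul_sum, hp.2, mul_one]
  · intro k i
    rw [abs_div, abs_of_pos hdR, div_le_iff₀ hdR]; exact habs k i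
  · intro k
    have : ∑ i, (d * p i) * (Q k i / d)^2 = Q k k / d := by
      rw [hrep k k, Finset.sum_div]
      refine Finset.sum_congr rfl fun i _ => ?_
      field_simp
    rw [this, div_le_iff₀ hdR]; exact hQd k
  · intro g hg k
    have hgW : g = W.mulVec (b.repr ⟨g, hg⟩) := by
      rw [hWv, b.sum_repr]
    have h1 : (Q * Matrix.diagonal p).mulVec g = g := by
      conv_lhs => rw [hgW, Matrix.mulVec_mulVec, hQW]
      exact hgW.symm
    conv_lhs => rw [← h1]
    simp only [Matrix.mulVec, dotProduct, Matrix.mul_diagonal]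
    refine Finset.sum_congr rfl fun i _ => ?_
    field_simp

lemma weier {ι : Type*} (s : Finset ι) (x : ι → ℝ) (h0 : ∀ i, 0 ≤ x i) (h1 : ∀ i, x i ≤ 1) :
    1 - ∑ i ∈ s, x i ≤ ∏ i ∈ s, (1 - x i) := by
  classical
  induction s using Finset.induction_on with
  | empty => simp
  | insert a s ha ih =>
    rw [Finset.sum_insert ha, Finset.prod_insert ha]
    have hs : 0 ≤ ∑ i ∈ s, x i := Finset.sum_nonneg fun i _ => h0 i
    have := mul_le_mul_of_nonneg_left ih (sub_nonneg.mpr (h1 a))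
    nlinarith [mul_nonneg (h0 a) hs]

/-- Probability that a random subset, with independent inclusions, is `s`. -/
def selW {ι : Type*} [Fintype ι] [DecidableEq ι] (lam : ι → ℝ) (s : Finset ι) : ℝ :=
  (∏ i ∈ s, lam i) * ∏ i ∈ Finset.univ \ s, (1 - lam i)

open Classical in
lemma selW_marginal {ι : Type*} [Fintype ι] [DecidableEq ι] (lam : ι → ℝ) (a : ι) (B : ι → Prop) :
    ∑ s : Finset ι, selW lam s * (if a ∈ s ∧ ∀ b ∈ s, b ≠ a → ¬ B b then 1 else 0) =
      lam a * ∏ b, (1 - if b ≠ a ∧ B b then lam b else 0) := by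
  have h := Finset.prod_add (fun b => if b = a then lam a else if B b then 0 else lam b)
    (fun b => if b = a then 0 else 1 - lam b) Finset.univ
  rw [Finset.powerset_univ] at h
  have hl : lam a * ∏ b, (1 - if b ≠ a ∧ B b then lam b else 0) =
      ∏ b, ((if b = a then lam a else if B b then 0 else lam b) +
        (if b = a then 0 else 1 - lam b)) := by
    have : lam a = ∏ b, (if b = a then lam a else 1) := by simp
    conv_lhs => rw [this]
    rw [← Finset.prod_mul_distrib]
    refine Finset.prod_congr rfl fun b _ => ?_
    by_cases hb : b = a
    · simp [hb]
    · by_cases hB : B b <;> simp [hb, hB]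
  rw [hl, h]
  refine Finset.sum_congr rfl fun s _ => ?_
  split_ifs with hc
  · rw [mul_one, selW]
    congr 1
    · refine Finset.prod_congr rfl fun b hb => ?_
      by_cases hba : b = a
      · simp [hba]
      · simp [hba, hc.2 b hb hba]
    · refine Finset.prod_congr rfl fun b hb => ?_
      have hba : b ≠ a := by
        rintro rfl
        exact (Finset.mem_sdiff.mp hb).2 hc.1
      simp [hba]
  · rw [mul_zero]
    symm
    by_cases ha : a ∈ s
    · have : ∃ b ∈ s, b ≠ a ∧ B b := by
        by_contra hcon
        exact hc ⟨ha, fun b hb hba hB => hcon ⟨b, hb, hba, hB⟩⟩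
      obtain ⟨b, hb, hba, hB⟩ := this
      rw [Finset.prod_eq_zero hb (by simp [hba, hB]), zero_mul]
    · rw [Finset.prod_eq_zero (i := a) (s := Finset.univ \ s) (by simp [ha]) (by simp), mul_zero]

lemma selection {Y : Type*} [NormedAddCommGroup Y] [NormedSpace ℝ Y] {m : ℕ}
    (V : (Fin m → ℝ) →ₗ[ℝ] Y) (P : ℝ)
    (hV : ∀ (ι : Type) [Fintype ι] (h : ι → Fin m → ℝ), (∀ k, ∑ j, |h j k| ≤ 1) →
      ∑ j, ‖V (h j)‖ ^ 2 ≤ P ^ 2)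
    {ι : Type} [Fintype ι] [DecidableEq ι] (lam : ι → ℝ) (h0 : ∀ i, 0 ≤ lam i)
    (h1 : ∀ i, lam i ≤ 1) (g : ι → Fin m → ℝ) (hg : ∀ i k, |g i k| ≤ 1)
    (hs : ∀ k, ∑ i, (if g i k ≠ 0 then lam i else 0) ≤ 1 / 2) :
    ∑ i, lam i * ‖V (g i)‖ ^ 2 ≤ 4 * P ^ 2 := by
  classical
  set Pr : ι → Fin m → ℝ := fun a k => ∏ b, (1 - if b ≠ a ∧ g b k ≠ 0 then lam b else 0) with hPr
  have hPr2 : ∀ a k, 1 / 2 ≤ Pr a k := by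
    intro a k
    have := weier Finset.univ (fun b => if b ≠ a ∧ g b k ≠ 0 then lam b else 0)
      (fun b => by split_ifs; exacts [h0 b, le_rfl])
      (fun b => by split_ifs; exacts [h1 b, zero_le_one])
    refine le_trans ?_ this
    have : ∑ b, (if b ≠ a ∧ g b k ≠ 0 then lam b else 0) ≤ ∑ i, (if g i k ≠ 0 then lam i else 0) := by
      refine Finset.sum_le_sum fun b _ => ?_
      by_cases hb : g b k = 0
      · simp [hb]
      · by_cases hba : b = a
        · subst hba; simp [hb, h0]
        · simp [hb, hba]
    linarith [hs k]
  set h : Finset ι → ι → Fin m → ℝ := fun s a k =>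
    (if a ∈ s ∧ ∀ b ∈ s, b ≠ a → ¬ (g b k ≠ 0) then 1 else 0) * (g a k / (2 * Pr a k)) with hh
  have hw0 : ∀ s, 0 ≤ selW lam s := fun s =>
    mul_nonneg (Finset.prod_nonneg fun i _ => h0 i)
      (Finset.prod_nonneg fun i _ => sub_nonneg.mpr (h1 i))
  have hw1 : ∑ s : Finset ι, selW lam s = 1 := by
    have := Finset.prod_add lam (fun b => 1 - lam b) Finset.univ
    rw [Finset.powerset_univ] at this
    simp only [selW]
    rw [← this]; simp
  have hwa : ∀ a, ∑ s : Finset ι, selW lam s * (if a ∈ s then 1 else 0) = lam a := by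
    intro a
    have := selW_marginal lam a (fun _ => False)
    simpa using this
  have hsum : ∀ a, ∑ s : Finset ι, selW lam s • h s a = (lam a / 2) • g a := by
    intro a
    ext k
    have : ∑ s : Finset ι, selW lam s * (if a ∈ s ∧ ∀ b ∈ s, b ≠ a → ¬ (g b k ≠ 0) then 1 else 0) =
        lam a * Pr a k := by
      convert selW_marginal lam a (fun b => g b k ≠ 0)
    simp only [Finset.sum_apply, Pi.smul_apply, smul_eq_mul, hh]
    simp only [← mul_assoc]
    rw [← Finset.sum_mul, this]
    have hp : 0 < Pr a k := by linarith [hPr2 a k]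
    field_simp
  have hbd : ∀ s k, ∑ a, |h s a k| ≤ 1 := by
    intro s k
    have hle : ∀ a, |h s a k| ≤ 1 := by
      intro a
      have hp := hPr2 a k
      simp only [hh]
      split_ifs
      · rw [one_mul, abs_div, abs_of_pos (by linarith : 0 < 2 * Pr a k), div_le_one (by linarith)]
        linarith [hg a k]
      · simp
    by_cases hex : ∃ a, h s a k ≠ 0
    · obtain ⟨a, ha⟩ := hex
      rw [Finset.sum_eq_single a]
      · exact hle a
      · intro b _ hba
        rw [abs_eq_zero]
        by_contra hb
        simp only [hh, ne_eq, mul_eq_zero, not_or, ite_eq_right_iff, one_ne_zero, imp_false,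
          not_not, div_eq_zero_iff] at ha hb
        exact ha.2.1 (hb.1.2 a ha.1.1 (Ne.symm hba))
      · simp
    · push Not at hex
      simp [hex]
  have hZ : ∀ s, ∑ a, ‖V (h s a)‖ ^ 2 ≤ P ^ 2 := fun s => hV ι (h s) (hbd s)
  have hJ : ∀ a, lam a * ‖V (g a)‖ ^ 2 ≤ 4 * ∑ s : Finset ι, selW lam s * ‖V (h s a)‖ ^ 2 := by
    intro a
    have hn : lam a / 2 * ‖V (g a)‖ ≤ ∑ s : Finset ι, selW lam s * ‖V (h s a)‖ := by
      have e : lam a / 2 * ‖V (g a)‖ = ‖V ((lam a / 2) • g a)‖ := by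
        rw [map_smul, norm_smul, Real.norm_of_nonneg (by linarith [h0 a])]
      rw [e, ← hsum, map_sum]
      refine (norm_sum_le _ _).trans (Finset.sum_le_sum fun s _ => ?_)
      rw [map_smul, norm_smul, Real.norm_of_nonneg (hw0 s)]
    have hcs := Finset.sum_sq_le_sum_mul_sum_of_sq_le_mul (Finset.univ : Finset (Finset ι))
      (r := fun s => selW lam s * ‖V (h s a)‖)
      (f := fun s => selW lam s * (if a ∈ s then 1 else 0))
      (g := fun s => selW lam s * ‖V (h s a)‖ ^ 2)
      (fun s _ => mul_nonneg (hw0 s) (by split_ifs <;> norm_num))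
      (fun s _ => mul_nonneg (hw0 s) (by positivity))
      (fun s _ => by
        by_cases has : a ∈ s
        · simp only [has, if_true]; apply le_of_eq; ring
        · have : h s a = 0 := by
            ext k; simp [hh, has]
          simp [this])
    rw [hwa] at hcs
    set S := ∑ s : Finset ι, selW lam s * ‖V (h s a)‖ ^ 2
    have hS : 0 ≤ S := Finset.sum_nonneg fun s _ => mul_nonneg (hw0 s) (by positivity)
    rcases (h0 a).eq_or_lt with hz | hpos
    · rw [← hz]; linarith
    · have hsq : (lam a / 2 * ‖V (g a)‖) ^ 2 ≤ lam a * S :=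
        (pow_le_pow_left₀ (by positivity) hn 2).trans hcs
      have : lam a * (lam a * ‖V (g a)‖ ^ 2) ≤ lam a * (4 * S) := by nlinarith
      exact le_of_mul_le_mul_left this hpos
  calc ∑ i, lam i * ‖V (g i)‖ ^ 2
      ≤ ∑ a, 4 * ∑ s : Finset ι, selW lam s * ‖V (h s a)‖ ^ 2 := Finset.sum_le_sum fun a _ => hJ a
    _ = 4 * ∑ s : Finset ι, selW lam s * ∑ a, ‖V (h s a)‖ ^ 2 := by
        rw [← Finset.mul_sum, Finset.sum_comm]
        simp only [Finset.mul_sum]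
    _ ≤ 4 * ∑ s : Finset ι, selW lam s * P ^ 2 := by
        gcongr with s _
        · exact hw0 s
        · exact hZ s
    _ = 4 * P ^ 2 := by rw [← Finset.sum_mul, hw1, one_mul]

lemma band_decomp (x y : ℝ) (hx : |x| ≤ 2) (L : ℕ) :
    y = (if |x| ≤ 2 * (1/2:ℝ)^L then y else 0) +
      ∑ s : Fin L, (if (1/2:ℝ)^(s:ℕ) < |x| ∧ |x| ≤ 2 * (1/2:ℝ)^(s:ℕ) then y else 0) := by
  induction L with
  | zero => simp [hx]
  | succ L ih =>
    rw [Fin.sum_univ_castSucc]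
    simp only [Fin.val_castSucc, Fin.val_last]
    have e : 2 * (1/2:ℝ)^(L+1) = (1/2:ℝ)^L := by rw [pow_succ]; ring
    have hp : (0:ℝ) < (1/2:ℝ)^L := by positivity
    rw [e]
    have key : (if |x| ≤ 2 * (1/2:ℝ)^L then y else 0) = (if |x| ≤ (1/2:ℝ)^L then y else 0) +
        (if (1/2:ℝ)^L < |x| ∧ |x| ≤ 2 * (1/2:ℝ)^L then y else 0) := by
      by_cases h1 : |x| ≤ (1/2:ℝ)^L
      · have h2 : |x| ≤ 2 * (1/2:ℝ)^L := by linarith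
        rw [if_pos h1, if_pos h2, if_neg (by intro h; linarith [h.1]), add_zero]
      · have h3 : (1/2:ℝ)^L < |x| := not_le.mp h1
        rw [if_neg h1, zero_add]
        by_cases h2 : |x| ≤ 2 * (1/2:ℝ)^L
        · rw [if_pos h2, if_pos ⟨h3, h2⟩]
        · rw [if_neg h2, if_neg (fun h => h2 h.2)]
    rw [key] at ih
    linarith

lemma sq_add_le_of (a S T L : ℝ) (ha : 0 ≤ a) (hS : 0 ≤ S) (hT : 0 ≤ T) (hL : 0 ≤ L)
    (h : S ^ 2 ≤ L * T) : (a + S) ^ 2 ≤ (L + 1) * (a ^ 2 + T) := by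
  have h2 : 2 * a * S ≤ L * a ^ 2 + T := by
    refine (pow_le_pow_iff_left₀ (by positivity) (by positivity) two_ne_zero).mp ?_
    have := mul_le_mul_of_nonneg_left h (sq_nonneg a)
    nlinarith [sq_nonneg (L * a ^ 2 - T)]
  nlinarith

lemma levels {Y : Type*} [NormedAddCommGroup Y] [NormedSpace ℝ Y] {m : ℕ}
    (V : (Fin m → ℝ) →ₗ[ℝ] Y) (P : ℝ)
    (hV : ∀ (ι : Type) [Fintype ι] (h : ι → Fin m → ℝ), (∀ k, ∑ j, |h j k| ≤ 1) →
      ∑ j, ‖V (h j)‖ ^ 2 ≤ P ^ 2)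
    (n : ℕ) (c : Fin m → ℝ) (hc : ∀ i, 0 ≤ c i) (hcn : ∑ i, c i ≤ n)
    (f : Fin m → Fin m → ℝ) (hf : ∀ i k, |f i k| ≤ 2) (hf2 : ∀ k, ∑ i, c i * f i k ^ 2 ≤ 2) :
    ∑ i, c i * ‖V (f i)‖ ^ 2 ≤ 136 * (1 + Real.log n) * P ^ 2 := by
  classical
  have hlog : 0 ≤ Real.log n := Real.log_natCast_nonneg n
  set L := ⌈Real.log n⌉₊ with hL
  have hL1 : Real.log n ≤ L := Nat.le_ceil _
  have hL2 : (L:ℝ) ≤ Real.log n + 1 := (Nat.ceil_lt_add_one hlog).le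
  set u : ℕ → ℝ := fun s => (1/2:ℝ)^s with hu
  have hu0 : ∀ s, 0 < u s := fun s => by positivity
  have hnu : (n:ℝ) * u L ^ 2 ≤ 1 := by
    have h4 : (n:ℝ) ≤ 4 ^ L := by
      rcases Nat.eq_zero_or_pos n with h | h
      · subst h; simp
      · have hnR : (0:ℝ) < n := by exact_mod_cast h
        calc (n:ℝ) = Real.exp (Real.log n) := (Real.exp_log hnR).symm
          _ ≤ Real.exp L := Real.exp_le_exp.mpr hL1
          _ = Real.exp 1 ^ L := by rw [← Real.exp_nat_mul, mul_one]
          _ ≤ 4 ^ L := by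
            gcongr
            linarith [Real.exp_one_lt_d9]
    have e : u L ^ 2 = 1 / 4 ^ L := by
      simp only [hu]
      rw [← pow_mul, mul_comm, pow_mul, ← one_div_pow]; norm_num
    rw [e, mul_one_div, div_le_one (by positivity)]
    exact h4
  set g : Fin m × Fin L → Fin m → ℝ := fun a k =>
    if u a.2 < |f a.1 k| ∧ |f a.1 k| ≤ 2 * u a.2 then f a.1 k / (2 * u a.2) else 0 with hg
  set r : Fin m → Fin m → ℝ := fun i k => if |f i k| ≤ 2 * u L then f i k else 0 with hr
  set l0 : Fin m × Fin L → ℝ := fun a => c a.1 * u a.2 ^ 2 / 4 with hl0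
  have hl00 : ∀ a, 0 ≤ l0 a := fun a => by
    have := hc a.1
    simp only [hl0]; positivity
  have hl0s : ∀ k, ∑ a, (if g a k ≠ 0 then l0 a else 0) ≤ 1 / 2 := by
    intro k
    calc ∑ a, (if g a k ≠ 0 then l0 a else 0)
        ≤ ∑ a : Fin m × Fin L, c a.1 / 4 *
          (if u a.2 < |f a.1 k| ∧ |f a.1 k| ≤ 2 * u a.2 then f a.1 k ^ 2 else 0) := by
          refine Finset.sum_le_sum fun a _ => ?_
          by_cases hb : u a.2 < |f a.1 k| ∧ |f a.1 k| ≤ 2 * u a.2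
          · rw [if_pos hb]
            have h1 : u a.2 ^ 2 ≤ f a.1 k ^ 2 := by
              rw [← sq_abs (f a.1 k)]
              exact pow_le_pow_left₀ (hu0 _).le hb.1.le 2
            have h2 := mul_le_mul_of_nonneg_left h1 (hc a.1)
            have h3 : 0 ≤ c a.1 * f a.1 k ^ 2 := mul_nonneg (hc a.1) (sq_nonneg _)
            simp only [hl0]
            split_ifs <;> linarith
          · have : g a k = 0 := by simp only [hg]; rw [if_neg hb]
            simp [this, hb]
      _ = ∑ i, c i / 4 * ∑ s : Fin L,
          (if u s < |f i k| ∧ |f i k| ≤ 2 * u s then f i k ^ 2 else 0) := by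
          rw [Fintype.sum_prod_type]
          simp only [Finset.mul_sum]
      _ ≤ ∑ i, c i / 4 * f i k ^ 2 := by
          refine Finset.sum_le_sum fun i _ => ?_
          refine mul_le_mul_of_nonneg_left ?_ (by linarith [hc i])
          have h1 := band_decomp (f i k) (f i k ^ 2) (hf i k) L
          have h2 : 0 ≤ (if |f i k| ≤ 2 * (1/2:ℝ)^L then f i k ^ 2 else 0) := by
            split_ifs <;> positivity
          simp only [hu]
          linarith
      _ = (∑ i, c i * f i k ^ 2) / 4 := by
          rw [Finset.sum_div]; exact Finset.sum_congr rfl fun i _ => by ring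
      _ ≤ 1 / 2 := by linarith [hf2 k]
  have hsel := selection V P hV (fun a => min (l0 a) 1) (fun a => le_min (hl00 a) zero_le_one)
    (fun a => min_le_right _ _) g (fun a k => by
      simp only [hg]
      split_ifs with hb
      · rw [abs_div, abs_of_pos (by linarith [hu0 a.2] : 0 < 2 * u a.2),
          div_le_one (by linarith [hu0 a.2])]
        exact hb.2
      · simp)
    (fun k => le_trans (Finset.sum_le_sum fun a _ => by
      split_ifs
      · exact min_le_left _ _
      · exact le_rfl) (hl0s k))
  have hmain : ∑ a, l0 a * ‖V (g a)‖ ^ 2 ≤ 4 * P ^ 2 := by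
    refine le_trans (Finset.sum_le_sum fun a _ => ?_) hsel
    by_cases h1 : l0 a ≤ 1
    · rw [min_eq_left h1]
    · have : g a = 0 := by
        ext k
        by_contra hne
        have h2 := hl0s k
        have h3 : (if g a k ≠ 0 then l0 a else 0) ≤ ∑ a, (if g a k ≠ 0 then l0 a else 0) :=
          Finset.single_le_sum (f := fun a => if g a k ≠ 0 then l0 a else 0)
            (fun b _ => by split_ifs; exacts [hl00 b, le_rfl]) (Finset.mem_univ a)
        rw [if_pos (show g a k ≠ 0 from hne)] at h3
        linarith [not_le.mp h1]
      simp [this]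
  have hrV : ∀ i, ‖V (r i)‖ ^ 2 ≤ 4 * u L ^ 2 * P ^ 2 := by
    intro i
    have hpos : 0 < 2 * u L := by linarith [hu0 L]
    have h1 := hV Unit (fun _ => (2 * u L)⁻¹ • r i) (fun k => by
      simp only [Finset.univ_unique, Finset.sum_singleton, Pi.smul_apply, smul_eq_mul, abs_mul,
        abs_inv, abs_of_pos hpos]
      rw [inv_mul_le_iff₀ hpos, mul_one]
      simp only [hr]
      split_ifs with h
      · exact h
      · simp [hpos.le])
    simp only [Finset.univ_unique, Finset.sum_singleton, map_smul, norm_smul, norm_inv,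
      Real.norm_of_nonneg hpos.le, mul_pow, inv_pow] at h1
    rw [inv_mul_le_iff₀ (by positivity)] at h1
    linarith
  have hVf : ∀ i, ‖V (f i)‖ ≤ ‖V (r i)‖ + ∑ s : Fin L, 2 * u s * ‖V (g (i, s))‖ := by
    intro i
    have e : f i = r i + ∑ s : Fin L, (2 * u s) • g (i, s) := by
      ext k
      simp only [Pi.add_apply, Finset.sum_apply, Pi.smul_apply, smul_eq_mul, hr, hg]
      conv_lhs => rw [band_decomp (f i k) (f i k) (hf i k) L]
      congr 1
      refine Finset.sum_congr rfl fun s _ => ?_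
      have := hu0 s
      simp only [mul_ite, mul_zero]
      rw [mul_div_cancel₀ _ (by positivity)]
    conv_lhs => rw [e]
    rw [map_add, map_sum]
    refine (norm_add_le _ _).trans (add_le_add_right ((norm_sum_le _ _).trans ?_) _)
    refine Finset.sum_le_sum fun s _ => ?_
    rw [map_smul, norm_smul, Real.norm_of_nonneg (by linarith [hu0 s])]
  have hVf2 : ∀ i, c i * ‖V (f i)‖ ^ 2 ≤ (L + 1) * (c i * (4 * u L ^ 2 * P ^ 2) +
      16 * ∑ s : Fin L, l0 (i, s) * ‖V (g (i, s))‖ ^ 2) := by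
    intro i
    have hcs := sq_sum_le_card_mul_sum_sq (s := (Finset.univ : Finset (Fin L)))
      (f := fun s : Fin L => 2 * u s * ‖V (g (i, s))‖)
    rw [Finset.card_univ, Fintype.card_fin] at hcs
    have h1 := sq_add_le_of ‖V (r i)‖ (∑ s : Fin L, 2 * u s * ‖V (g (i, s))‖)
      (∑ s : Fin L, (2 * u s * ‖V (g (i, s))‖) ^ 2) L (norm_nonneg _)
      (Finset.sum_nonneg fun s _ => by have := hu0 s; positivity)
      (Finset.sum_nonneg fun s _ => by positivity) (by positivity) hcs
    have h2 := (pow_le_pow_left₀ (norm_nonneg _) (hVf i) 2).trans h1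
    have h3 : 16 * ∑ s : Fin L, l0 (i, s) * ‖V (g (i, s))‖ ^ 2 =
        c i * ∑ s : Fin L, (2 * u s * ‖V (g (i, s))‖) ^ 2 := by
      rw [Finset.mul_sum, Finset.mul_sum]
      refine Finset.sum_congr rfl fun s _ => ?_
      simp only [hl0]; ring
    rw [h3, ← mul_add, mul_left_comm]
    refine mul_le_mul_of_nonneg_left (h2.trans ?_) (hc i)
    gcongr
    exact hrV i
  calc ∑ i, c i * ‖V (f i)‖ ^ 2
      ≤ ∑ i, (L + 1) * (c i * (4 * u L ^ 2 * P ^ 2) +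
        16 * ∑ s : Fin L, l0 (i, s) * ‖V (g (i, s))‖ ^ 2) := Finset.sum_le_sum fun i _ => hVf2 i
    _ = (L + 1) * ((∑ i, c i) * (4 * u L ^ 2 * P ^ 2) + 16 * ∑ a, l0 a * ‖V (g a)‖ ^ 2) := by
        rw [← Finset.mul_sum, Finset.sum_add_distrib, ← Finset.sum_mul, ← Finset.mul_sum,
          Fintype.sum_prod_type]
    _ ≤ (L + 1) * (n * (4 * u L ^ 2 * P ^ 2) + 16 * (4 * P ^ 2)) := by gcongr
    _ = (L + 1) * ((n * u L ^ 2) * (4 * P ^ 2) + 16 * (4 * P ^ 2)) := by ring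
    _ ≤ ((1 + Real.log n) + (1 + Real.log n)) * (1 * (4 * P ^ 2) + 16 * (4 * P ^ 2)) := by
        gcongr <;> linarith
    _ = _ := by ring

lemma eSum_one_ofReal {N : ℕ} (a : Fin N → ℝ) (ha : ∀ j, 0 ≤ a j) :
    eSum 1 (fun j => ENNReal.ofReal (a j)) = ENNReal.ofReal (∑ j, a j) := by
  simp only [eSum, ENNReal.one_ne_top, if_false, ENNReal.toReal_one, ENNReal.rpow_one, div_one]
  rw [ENNReal.ofReal_sum_of_nonneg fun j _ => ha j]

lemma eSum_two_ofReal {N : ℕ} (a : Fin N → ℝ) (ha : ∀ j, 0 ≤ a j) :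
    eSum 2 (fun j => ENNReal.ofReal (a j)) = ENNReal.ofReal (Real.sqrt (∑ j, a j ^ 2)) := by
  simp only [eSum, ENNReal.ofNat_ne_top, if_false, ENNReal.toReal_ofNat]
  rw [Real.sqrt_eq_rpow, ← ENNReal.ofReal_rpow_of_nonneg (Finset.sum_nonneg fun j _ => sq_nonneg _)
    (by norm_num), ENNReal.ofReal_sum_of_nonneg fun j _ => sq_nonneg _]
  congr 1
  refine Finset.sum_congr rfl fun j _ => ?_
  rw [ENNReal.ofReal_rpow_of_nonneg (ha j) (by norm_num)]
  norm_num

lemma piPQ_two_one_bound {X Y : Type*} [NormedAddCommGroup X] [NormedSpace ℝ X]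
    [NormedAddCommGroup Y] [NormedSpace ℝ Y] (T : X →L[ℝ] Y) (hfin : piPQ 2 1 T < ∞)
    {N : ℕ} (z : Fin N → X) (hz : ∀ f : X →L[ℝ] ℝ, ‖f‖ ≤ 1 → ∑ j, |f (z j)| ≤ 1) :
    ∑ j, ‖T (z j)‖ ^ 2 ≤ (piPQ 2 1 T).toReal ^ 2 := by
  have hw : weakLq 1 z ≤ 1 := by
    refine iSup_le fun f => ?_
    rw [eSum_one_ofReal _ fun j => abs_nonneg _]
    exact ENNReal.ofReal_le_one.mpr (hz f.1 f.2)
  have h1 : eSum 2 (fun k => ENNReal.ofReal ‖T (z k)‖) ≤ piPQ 2 1 T :=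
    le_trans (le_iSup (fun x : {x : Fin N → X // weakLq 1 x ≤ 1} =>
      eSum 2 fun k => ENNReal.ofReal ‖T (x.1 k)‖) ⟨z, hw⟩) (le_iSup (fun n => piN 2 1 n T) N)
  rw [eSum_two_ofReal _ fun j => norm_nonneg _, ENNReal.ofReal_le_iff_le_toReal hfin.ne] at h1
  exact (Real.sqrt_le_left ENNReal.toReal_nonneg).mp h1

lemma main_bound {X Y : Type*} [NormedAddCommGroup X] [NormedSpace ℝ X]
    [NormedAddCommGroup Y] [NormedSpace ℝ Y] (n : ℕ) (T : X →L[ℝ] Y) (hT : RankLE T n)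
    (hfin : piPQ 2 1 T < ∞) {m : ℕ} (x : Fin m → X)
    (hx : ∀ f : X →L[ℝ] ℝ, ‖f‖ ≤ 1 → ∑ j, |f (x j)| ≤ 1) :
    ∑ k, ‖T (x k)‖ ≤ 12 * ((n : ℝ) * (1 + Real.log n)) ^ ((1 : ℝ) / 2) * (piPQ 2 1 T).toReal := by
  classical
  obtain ⟨hfd, hrank⟩ := hT
  set P := (piPQ 2 1 T).toReal with hP
  have hP0 : 0 ≤ P := ENNReal.toReal_nonneg
  choose φ hφ1 hφ2 using fun k => exists_dual_vector'' ℝ (T (x k))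
  set w : Y →ₗ[ℝ] (Fin m → ℝ) := LinearMap.pi fun k => (φ k : Y →ₗ[ℝ] ℝ) with hw
  set G := Submodule.map w (LinearMap.range (T : X →ₗ[ℝ] Y)) with hG
  have hGn : (Module.finrank ℝ G : ℝ) ≤ n := by
    exact_mod_cast (Submodule.finrank_map_le w _).trans hrank
  obtain ⟨c, K, hc, hcs, hK, hK2, hrep⟩ := design G
  set U : (Fin m → ℝ) →ₗ[ℝ] X := Fintype.linearCombination ℝ x with hU
  have hUa : ∀ h, U h = ∑ k, h k • x k := fun h => Fintype.linearCombination_apply ℝ x h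
  set V : (Fin m → ℝ) →ₗ[ℝ] Y := (T : X →ₗ[ℝ] Y) ∘ₗ U with hVdef
  have hVa : ∀ h, V h = T (U h) := fun h => rfl
  have hV : ∀ (ι : Type) [Fintype ι] (h : ι → Fin m → ℝ), (∀ k, ∑ j, |h j k| ≤ 1) →
      ∑ j, ‖V (h j)‖ ^ 2 ≤ P ^ 2 := by
    intro ι _ h hh
    have e := Fintype.equivFin ι
    have h1 := piPQ_two_one_bound T hfin (fun j => U (h (e.symm j))) (by
      intro f hf
      calc ∑ j, |f (U (h (e.symm j)))| = ∑ j, |f (U (h j))| :=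
            Equiv.sum_comp e.symm (fun j => |f (U (h j))|)
        _ ≤ ∑ j, ∑ k, |h j k| * |f (x k)| := by
            refine Finset.sum_le_sum fun j _ => ?_
            rw [hUa, map_sum]
            refine (Finset.abs_sum_le_sum_abs _ _).trans (Finset.sum_le_sum fun k _ => ?_)
            rw [map_smul, smul_eq_mul, abs_mul]
        _ = ∑ k, (∑ j, |h j k|) * |f (x k)| := by
            rw [Finset.sum_comm]; simp only [Finset.sum_mul]
        _ ≤ ∑ k, 1 * |f (x k)| := by
            refine Finset.sum_le_sum fun k _ => ?_
            exact mul_le_mul_of_nonneg_right (hh k) (abs_nonneg _)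
        _ ≤ 1 := by simpa using hx f hf)
    rw [← Equiv.sum_comp e.symm (fun j => ‖V (h j)‖ ^ 2)]
    exact h1
  have hlev := levels V P hV n c hc (hcs.trans_le hGn) (fun i k => K k i) (fun i k => hK k i) hK2
  have htr : ∑ k, ‖T (x k)‖ ≤ ∑ i, c i * ‖V (fun k => K k i)‖ := by
    calc ∑ k, ‖T (x k)‖ = ∑ k, ∑ i, c i * K k i * φ i (T (x k)) := by
          refine Finset.sum_congr rfl fun k _ => ?_
          have hmem : w (T (x k)) ∈ G := Submodule.mem_map_of_mem ⟨x k, rfl⟩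
          have := hrep _ hmem k
          have h2 : w (T (x k)) k = ‖T (x k)‖ := hφ2 k
          rw [← h2, this]
          rfl
      _ = ∑ i, c i * φ i (V (fun k => K k i)) := by
          rw [Finset.sum_comm]
          refine Finset.sum_congr rfl fun i _ => ?_
          rw [hVa, hUa, map_sum, map_sum, Finset.mul_sum]
          refine Finset.sum_congr rfl fun k _ => ?_
          rw [map_smul, map_smul, smul_eq_mul, mul_assoc]
      _ ≤ _ := by
          refine Finset.sum_le_sum fun i _ => mul_le_mul_of_nonneg_left ?_ (hc i)
          refine (le_abs_self _).trans ?_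
          have := (φ i).le_of_opNorm_le (hφ1 i) (V (fun k => K k i))
          simpa using this
  have hcs2 := Finset.sum_sq_le_sum_mul_sum_of_sq_le_mul (Finset.univ : Finset (Fin m))
    (r := fun i => c i * ‖V (fun k => K k i)‖) (f := c)
    (g := fun i => c i * ‖V (fun k => K k i)‖ ^ 2) (fun i _ => hc i)
    (fun i _ => mul_nonneg (hc i) (sq_nonneg _)) (fun i _ => by apply le_of_eq; ring)
  have hlog : 0 ≤ Real.log n := Real.log_natCast_nonneg n
  rw [← Real.sqrt_eq_rpow]
  have hB0 : 0 ≤ (n : ℝ) * (1 + Real.log n) := by positivity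
  refine htr.trans (abs_le_of_sq_le_sq' ?_ (by positivity)).2
  rw [mul_pow, mul_pow, Real.sq_sqrt hB0]
  refine hcs2.trans ?_
  calc (∑ i, c i) * ∑ i, c i * ‖V (fun k => K k i)‖ ^ 2
      ≤ n * (136 * (1 + Real.log n) * P ^ 2) :=
        mul_le_mul (hcs.trans_le hGn) hlev
          (Finset.sum_nonneg fun i _ => mul_nonneg (hc i) (sq_nonneg _)) (by positivity)
    _ ≤ 12 ^ 2 * (n * (1 + Real.log n)) * P ^ 2 := by
        have : 0 ≤ (n * (1 + Real.log n)) * P ^ 2 := by positivity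
        nlinarith

/-- there is an absolute constant `c₀` such that for any absolutely
`(2,1)`-summing operator `T` of rank at most `n`,
`π_1(T) ≤ c₀ (n(1 + ln n))^{1/2} π_{2,1}(T)`. -/
theorem statement9 :
    ∃ c₀ : ℝ, 0 < c₀ ∧
      ∀ (n : ℕ) (X Y : Type*) [NormedAddCommGroup X] [NormedSpace ℝ X] [CompleteSpace X]
        [NormedAddCommGroup Y] [NormedSpace ℝ Y] [CompleteSpace Y]
        (T : X →L[ℝ] Y), RankLE T n → piPQ 2 1 T < ∞ →
        piPQ 1 1 T ≤
          ENNReal.ofReal (c₀ * ((n : ℝ) * (1 + Real.log n)) ^ ((1 : ℝ) / 2)) *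
            piPQ 2 1 T := by
  refine ⟨12, by norm_num, ?_⟩
  intro n X Y _ _ _ _ _ _ T hT hfin
  refine iSup_le fun m => iSup_le fun x => ?_
  have hlog : 0 ≤ Real.log n := Real.log_natCast_nonneg n
  rw [eSum_one_ofReal _ fun k => norm_nonneg _, ← ENNReal.ofReal_toReal hfin.ne,
    ← ENNReal.ofReal_mul (by positivity)]
  refine ENNReal.ofReal_le_ofReal ?_
  refine main_bound n T hT hfin x.1 fun f hf => ?_
  have h1 := (le_iSup (fun f : {f : X →L[ℝ] ℝ // ‖f‖ ≤ 1} =>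
    eSum 1 fun k => ENNReal.ofReal |f.1 (x.1 k)|) ⟨f, hf⟩).trans x.2
  rw [eSum_one_ofReal _ fun k => abs_nonneg _] at h1
  exact ENNReal.ofReal_le_one.mp h1

end
end

section
/- There is an absolute constant c₀ such that for every r with 2 < r < ∞ (with conjugate exponent r', 1/r + 1/r' = 1), every n ∈ ℕ, and every bounded linear operator T : X → Y between real Banach spaces of rank at most n which is absolutely (r,1)-summing, one has π_1(T) ≤ c₀ · (1/2 − 1/r)^{−1/r'} · n^{1/r'} · π_{r,1}(T). -/
open scoped ENNReal NNReal BigOperators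

noncomputable section

lemma aux_young {r a b : ℝ} (hr : 1 < r) (ha : 0 ≤ a) (hb : 0 ≤ b) :
    r * (b ^ (r - 1) * a) ≤ a ^ r + (r - 1) * b ^ r := by
  have hc : r.HolderConjugate (r / (r - 1)) := Real.HolderConjugate.conjExponent hr
  have h := Real.young_inequality_of_nonneg ha (Real.rpow_nonneg hb (r - 1)) hc
  have hr1 : 0 < r - 1 := by linarith
  have e : (b ^ (r - 1)) ^ (r / (r - 1)) = b ^ r := by
    rw [← Real.rpow_mul hb]; congr 1; field_simp
  rw [e] at h
  have h2 := mul_le_mul_of_nonneg_left h (by linarith : 0 ≤ r)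
  have e2 : r * (a ^ r / r + b ^ r / (r / (r - 1))) = a ^ r + (r - 1) * b ^ r := by
    field_simp
  rw [e2] at h2
  linarith [mul_comm a (b ^ (r - 1))]

lemma aux_pisier {Y : Type*} [NormedAddCommGroup Y] [NormedSpace ℝ Y] (m : ℕ) (y : Fin m → Y)
    (r C : ℝ) (hr : 1 < r)
    (H : ∀ (N : ℕ) (z : Fin N → Fin m → ℝ), (∀ k, ∑ i, |z i k| ≤ 1) →
      ∑ i, ‖∑ k, z i k • y k‖ ^ r ≤ C) (δ : ℝ) (hδ : 0 < δ) :
    ∃ p : Fin m → ℝ, (∀ k, 0 ≤ p k) ∧ ∑ k, p k ≤ C ∧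
      ∀ x : Fin m → ℝ, (∀ k, |x k| ≤ 1) →
        ‖∑ k, x k • y k‖ ^ r ≤ δ + r * ∑ k, p k * |x k| := by
  let S : Set ℝ := {s | ∃ (N : ℕ) (z : Fin N → Fin m → ℝ), (∀ k, ∑ i, |z i k| ≤ 1) ∧
    s = ∑ i, ‖∑ k, z i k • y k‖ ^ r}
  have hSne : S.Nonempty := ⟨_, 0, fun _ _ => 0, by simp, rfl⟩
  have hSC : ∀ s ∈ S, s ≤ C := by
    rintro s ⟨N, z, hz, rfl⟩; exact H N z hz
  have hSb : BddAbove S := ⟨C, hSC⟩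
  obtain ⟨s, ⟨N, z, hz, rfl⟩, hs⟩ := exists_lt_of_lt_csSup hSne (show sSup S - δ < sSup S by linarith)
  set D := sSup S with hD
  have hDC : D ≤ C := csSup_le hSne hSC
  have hDle : ∀ (N : ℕ) (z : Fin N → Fin m → ℝ), (∀ k, ∑ i, |z i k| ≤ 1) →
      ∑ i, ‖∑ k, z i k • y k‖ ^ r ≤ D := fun N z hz => le_csSup hSb ⟨N, z, hz, rfl⟩
  set σ := ∑ i, ‖∑ k, z i k • y k‖ ^ r with hσ
  have hσD : σ ≤ D := hDle N z hz
  choose g hg1 hg2 using fun i => exists_dual_vector'' ℝ (∑ k, z i k • y k)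
  let q : Fin m → ℝ := fun k => ∑ i, ‖∑ k, z i k • y k‖ ^ (r - 1) * (z i k * g i (y k))
  have key : ∀ a : Fin m → ℝ, r * ∑ k, q k * a k ≤
      ∑ i, ‖∑ k, (a k * z i k) • y k‖ ^ r + (r - 1) * σ := by
    intro a
    have e1 : ∑ k, q k * a k =
        ∑ i, ‖∑ k, z i k • y k‖ ^ (r - 1) * g i (∑ k, (a k * z i k) • y k) := by
      simp only [q, Finset.sum_mul, map_sum, map_smul, smul_eq_mul, Finset.mul_sum]
      rw [Finset.sum_comm]
      refine Finset.sum_congr rfl fun i _ => Finset.sum_congr rfl fun k _ => by ring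
    rw [e1, Finset.mul_sum, hσ, Finset.mul_sum, ← Finset.sum_add_distrib]
    refine Finset.sum_le_sum fun i _ => ?_
    refine le_trans ?_ (aux_young hr (norm_nonneg _) (norm_nonneg _))
    have : g i (∑ k, (a k * z i k) • y k) ≤ ‖∑ k, (a k * z i k) • y k‖ := by
      refine (le_abs_self _).trans ?_
      have := (g i).le_of_opNorm_le (hg1 i) (∑ k, (a k * z i k) • y k)
      simpa using this
    have h0 : 0 ≤ ‖∑ k, z i k • y k‖ ^ (r - 1) := Real.rpow_nonneg (norm_nonneg _) _
    have hr0 : 0 ≤ r := by linarith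
    gcongr
  have hq1 : ∑ k, q k = σ := by
    have e1 : ∑ k, q k =
        ∑ i, ‖∑ k, z i k • y k‖ ^ (r - 1) * g i (∑ k, z i k • y k) := by
      simp only [q, map_sum, map_smul, smul_eq_mul, Finset.mul_sum]
      rw [Finset.sum_comm]
    rw [e1, hσ]
    refine Finset.sum_congr rfl fun i _ => ?_
    rw [hg2]
    simp only [RCLike.ofReal_real_eq_id, id]
    by_cases h0 : ‖∑ k, z i k • y k‖ = 0
    · rw [h0]; simp [Real.zero_rpow (show r ≠ 0 by linarith)]
    · rw [Real.rpow_sub_one h0]; field_simp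
  refine ⟨fun k => |q k|, fun k => abs_nonneg _, ?_, ?_⟩
  · have h := key (fun k => SignType.sign (q k))
    have h2 : ∑ i, ‖∑ k, (((SignType.sign (q k) : SignType) : ℝ) * z i k) • y k‖ ^ r ≤ D := by
      apply hDle N (fun i k => ((SignType.sign (q k) : SignType) : ℝ) * z i k)
      intro k
      refine le_trans (Finset.sum_le_sum fun i _ => ?_) (hz k)
      rw [abs_mul]
      refine mul_le_of_le_one_left (abs_nonneg _) ?_
      rcases SignType.sign (q k) <;> simp
    have h3 : ∑ k, q k * ((SignType.sign (q k) : SignType) : ℝ) = ∑ k, |q k| :=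
      Finset.sum_congr rfl fun k _ => self_mul_sign _
    rw [h3] at h
    have : r * ∑ k, |q k| ≤ r * D := by nlinarith
    exact (le_of_mul_le_mul_left this (by linarith)).trans hDC
  · intro x hx
    have h := key (fun k => 1 - |x k|)
    have h2 := hDle (N + 1) (Fin.cons x (fun i k => (1 - |x k|) * z i k)) (by
      intro k
      rw [Fin.sum_univ_succ]
      simp only [Fin.cons_zero, Fin.cons_succ, abs_mul]
      rw [← Finset.mul_sum, abs_of_nonneg (by linarith [hx k] : 0 ≤ 1 - |x k|)]
      nlinarith [hx k, hz k])
    rw [Fin.sum_univ_succ] at h2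
    simp only [Fin.cons_zero, Fin.cons_succ] at h2
    have e : ∑ k, q k * (1 - |x k|) = σ - ∑ k, q k * |x k| := by
      rw [← hq1, ← Finset.sum_sub_distrib]
      exact Finset.sum_congr rfl fun k _ => by ring
    rw [e] at h
    have h4 : ∑ k, q k * |x k| ≤ ∑ k, |q k| * |x k| :=
      Finset.sum_le_sum fun k _ => mul_le_mul_of_nonneg_right (le_abs_self _) (abs_nonneg _)
    have h5 : r * ∑ k, q k * |x k| ≤ r * ∑ k, |q k| * |x k| :=
      mul_le_mul_of_nonneg_left h4 (by linarith)
    nlinarith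


open scoped MatrixOrder ComplexOrder Matrix.Norms.L2Operator in
lemma aux_sqrt {d : ℕ} (M : Matrix (Fin d) (Fin d) ℝ) (hM : M.PosSemidef) :
    ∃ B : Matrix (Fin d) (Fin d) ℝ, M = B.transpose * B := by
  obtain ⟨B, hB⟩ := CStarAlgebra.nonneg_iff_eq_star_mul_self.mp hM.nonneg
  exact ⟨B, by rw [hB, Matrix.star_eq_conjTranspose, Matrix.conjTranspose_eq_transpose_of_trivial]⟩

def auxGram {m d : ℕ} (F : Matrix (Fin m) (Fin d) ℝ) (ρ : Fin m → ℝ) : Matrix (Fin d) (Fin d) ℝ :=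
  F.transpose * Matrix.diagonal ρ * F

lemma auxGram_quad {m d : ℕ} (F : Matrix (Fin m) (Fin d) ℝ) (ρ : Fin m → ℝ) (a : Fin d → ℝ) :
    a ⬝ᵥ (auxGram F ρ).mulVec a = ∑ k, ρ k * (F.mulVec a k) ^ 2 := by
  rw [auxGram, ← Matrix.mulVec_mulVec, ← Matrix.mulVec_mulVec, Matrix.mulVec_transpose,
    dotProduct_comm, ← Matrix.dotProduct_mulVec]
  simp only [dotProduct, Matrix.mulVec_diagonal]
  exact Finset.sum_congr rfl fun k _ => by ring

lemma auxGram_apply {m d : ℕ} (F : Matrix (Fin m) (Fin d) ℝ) (ρ : Fin m → ℝ) (i j : Fin d) :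
    auxGram F ρ i j = ∑ k, F k i * ρ k * F k j := by
  simp [auxGram, Matrix.mul_apply, Matrix.diagonal_apply]

lemma auxGram_posSemidef {m d : ℕ} (F : Matrix (Fin m) (Fin d) ℝ) (ρ : Fin m → ℝ)
    (hρ : ∀ k, 0 ≤ ρ k) : (auxGram F ρ).PosSemidef := by
  have := (Matrix.PosSemidef.diagonal (d := ρ) hρ).conjTranspose_mul_mul_same F
  simpa [auxGram, Matrix.conjTranspose_eq_transpose_of_trivial] using this

/-- normalization -/
lemma aux_normalize {m d : ℕ} (F : Matrix (Fin m) (Fin d) ℝ) (ρ : Fin m → ℝ)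
    (hρ : ∀ k, 0 ≤ ρ k) (h : ∀ a, ∑ k, ρ k * (F.mulVec a k) ^ 2 = 0 → a = 0) :
    ∃ B : Matrix (Fin d) (Fin d) ℝ, B.det ≠ 0 ∧ auxGram F ρ = B.transpose * B := by
  obtain ⟨B, hB⟩ := aux_sqrt _ (auxGram_posSemidef F ρ hρ)
  refine ⟨B, ?_, hB⟩
  intro h0
  obtain ⟨v, hv, hv0⟩ := Matrix.exists_mulVec_eq_zero_iff.2 h0
  apply hv
  apply h
  rw [← auxGram_quad, hB, ← Matrix.mulVec_mulVec, hv0]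
  simp

lemma auxGram_mul {m d : ℕ} (F : Matrix (Fin m) (Fin d) ℝ) (ρ : Fin m → ℝ)
    (B : Matrix (Fin d) (Fin d) ℝ) (hB : B.det ≠ 0) (h : auxGram F ρ = B.transpose * B) :
    auxGram (F * B⁻¹) ρ = 1 := by
  have hu : IsUnit B.det := hB.isUnit
  have : auxGram (F * B⁻¹) ρ = (B⁻¹).transpose * auxGram F ρ * B⁻¹ := by
    simp [auxGram, Matrix.transpose_mul, Matrix.mul_assoc]
  rw [this, h, ← Matrix.mul_assoc, ← Matrix.transpose_mul, Matrix.mul_nonsing_inv _ hu,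
    Matrix.transpose_one, Matrix.one_mul, Matrix.mul_nonsing_inv _ hu]

lemma aux_real (s : ℝ) (d : ℕ) (hs : 0 ≤ s) (h : ∀ t : ℝ, 0 < t → 1 + t * s ≤ (1 + t) ^ d) :
    s ≤ d := by
  by_contra hlt
  push Not at hlt
  have hd : (0 : ℝ) ≤ d := Nat.cast_nonneg d
  have hsd : 0 ≤ s * d := by positivity
  set t := (s - d) / (2 * (s * d + 1)) with ht
  have htp : 0 < t := by rw [ht]; apply div_pos <;> linarith
  have h1 := h t htp
  have h2 : (1 + t) ^ d ≤ Real.exp (t * d) := by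
    rw [mul_comm, Real.exp_nat_mul]
    exact pow_le_pow_left₀ (by linarith) (by linarith [Real.add_one_le_exp t]) d
  have h3 : 1 - t * d ≤ Real.exp (-(t * d)) := by linarith [Real.add_one_le_exp (-(t * d))]
  have h4 : (1 - t * d) * (1 + t * s) ≤ 1 := by
    calc (1 - t * d) * (1 + t * s) ≤ Real.exp (-(t * d)) * (1 + t * s) :=
          mul_le_mul_of_nonneg_right h3 (by positivity)
      _ ≤ Real.exp (-(t * d)) * Real.exp (t * d) :=
          mul_le_mul_of_nonneg_left (h1.trans h2) (Real.exp_pos _).le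
      _ = 1 := by rw [← Real.exp_add]; simp
  have h5 : t * (s - d) ≤ t * (t * (s * d)) := by nlinarith
  have h6 : s - d ≤ t * (s * d) := le_of_mul_le_mul_left h5 htp
  have h7 : t * (2 * (s * d + 1)) = s - d := by rw [ht]; field_simp
  nlinarith

lemma aux_dopt {m d : ℕ} (hm : 0 < m) (F : Matrix (Fin m) (Fin d) ℝ)
    (hF : ∀ a, F.mulVec a = 0 → a = 0) :
    ∃ ν : Fin m → ℝ, (∀ k, 0 ≤ ν k) ∧ ∑ k, ν k = 1 ∧
      ∀ a k, (F.mulVec a k) ^ 2 ≤ d * ∑ l, ν l * (F.mulVec a l) ^ 2 := by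
  have hcont : Continuous fun ν : Fin m → ℝ => (auxGram F ν).det := by
    unfold auxGram
    fun_prop
  have hm0 : (0 : ℝ) < m := by exact_mod_cast hm
  have huni : (fun _ => (1 / m : ℝ)) ∈ stdSimplex ℝ (Fin m) :=
    ⟨fun _ => by positivity, by simp [hm0.ne']⟩
  obtain ⟨ν, hν, hmax⟩ := (isCompact_stdSimplex ℝ (Fin m)).exists_isMaxOn ⟨_, huni⟩
    hcont.continuousOn
  have hpos : 0 < (auxGram F ν).det := by
    refine lt_of_lt_of_le ?_ (hmax huni)
    obtain ⟨B, hB, hBM⟩ := aux_normalize F (fun _ => (1 / m : ℝ)) huni.1 (by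
      intro a ha
      apply hF
      rw [Finset.sum_eq_zero_iff_of_nonneg (fun k _ => by positivity)] at ha
      funext k
      have := ha k (Finset.mem_univ _)
      simpa [hm0.ne', hm.ne'] using this)
    simp only [hBM, Matrix.det_mul, Matrix.det_transpose]
    exact mul_self_pos.2 hB
  obtain ⟨B, hBM⟩ := aux_sqrt _ (auxGram_posSemidef F ν hν.1)
  have hB : B.det ≠ 0 := by
    intro h0
    rw [hBM, Matrix.det_mul, h0] at hpos
    simp at hpos
  refine ⟨ν, hν.1, hν.2, ?_⟩
  set A := F * B⁻¹ with hA
  have hA1 : auxGram A ν = 1 := auxGram_mul F ν B hB hBM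
  have hFA : F = A * B := by
    rw [hA, Matrix.mul_assoc, Matrix.nonsing_inv_mul _ hB.isUnit, Matrix.mul_one]
  have hrow : ∀ k, A k ⬝ᵥ A k ≤ d := by
    intro k
    refine aux_real _ _ (Finset.sum_nonneg fun i _ => mul_self_nonneg _) ?_
    intro t ht
    let nut : Fin m → ℝ := fun l => (1 + t)⁻¹ * (ν l + t * Pi.single (M := fun _ => ℝ) k 1 l)
    have hnut : nut ∈ stdSimplex ℝ (Fin m) := by
      refine ⟨fun l => ?_, ?_⟩
      · have : 0 ≤ Pi.single (M := fun _ => ℝ) k 1 l := by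
          by_cases h : l = k <;> simp [Pi.single_apply, h]
        have := hν.1 l
        positivity
      · simp only [nut, ← Finset.mul_sum, Finset.sum_add_distrib, hν.2]
        simp
        field_simp
    have h1 := hmax hnut
    have h2 : auxGram F nut = B.transpose * auxGram A nut * B := by
      conv_lhs => rw [hFA]
      simp [auxGram, Matrix.transpose_mul, Matrix.mul_assoc]
    have h3 : auxGram A nut = (1 + t)⁻¹ •
        (1 + Matrix.replicateCol Unit (t • A k) * Matrix.replicateRow Unit (A k)) := by
      rw [← hA1]
      ext i j
      rw [Matrix.smul_apply, Matrix.add_apply, auxGram_apply, auxGram_apply]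
      have e : ∀ l, A l i * nut l * A l j = (1 + t)⁻¹ * (A l i * ν l * A l j) +
          (1 + t)⁻¹ * (t * (if l = k then A l i * A l j else 0)) := by
        intro l
        by_cases h : l = k <;> simp [nut, Pi.single_apply, h] <;> ring
      simp only [e, Finset.sum_add_distrib, ← Finset.mul_sum, Finset.sum_ite_eq',
        Finset.mem_univ, if_true]
      simp [Matrix.mul_apply]
      ring
    have h4 : (auxGram A nut).det = (1 + t)⁻¹ ^ d * (1 + t * (A k ⬝ᵥ A k)) := by
      rw [h3, Matrix.det_smul, Matrix.det_one_add_replicateCol_mul_replicateRow]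
      simp
    simp only [Set.mem_ofPred_eq] at h1
    rw [h2, hBM, Matrix.det_mul, Matrix.det_mul, Matrix.det_mul, h4, Matrix.det_transpose] at h1
    have hBB : 0 < B.det * B.det := mul_self_pos.2 hB
    have h5 : (1 + t)⁻¹ ^ d * (1 + t * (A k ⬝ᵥ A k)) ≤ 1 := by
      refine le_of_mul_le_mul_left ?_ hBB
      linarith
    rw [inv_pow, inv_mul_le_iff₀ (by positivity)] at h5
    linarith
  intro a k
  have e1 : ∑ l, ν l * (F.mulVec a l) ^ 2 = B.mulVec a ⬝ᵥ B.mulVec a := by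
    rw [hFA, ← Matrix.mulVec_mulVec, ← auxGram_quad, hA1, Matrix.one_mulVec]
  rw [e1]
  have e2 : F.mulVec a k = A k ⬝ᵥ B.mulVec a := by
    rw [hFA, ← Matrix.mulVec_mulVec]; rfl
  rw [e2]
  have cs : (A k ⬝ᵥ B.mulVec a) ^ 2 ≤ (A k ⬝ᵥ A k) * (B.mulVec a ⬝ᵥ B.mulVec a) := by
    simp only [dotProduct, ← sq]
    exact Finset.sum_mul_sq_le_sq_mul_sq _ _ _
  refine cs.trans (mul_le_mul_of_nonneg_right (hrow k) (Finset.sum_nonneg fun i _ => mul_self_nonneg _))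

lemma aux_factor {m : ℕ} (W : Matrix (Fin m) (Fin m) ℝ) :
    ∃ (F : Matrix (Fin m) (Fin (Module.finrank ℝ (LinearMap.range W.mulVecLin))) ℝ)
      (G : Matrix (Fin (Module.finrank ℝ (LinearMap.range W.mulVecLin))) (Fin m) ℝ),
      W = F * G ∧ ∀ a, F.mulVec a = 0 → a = 0 := by
  let bs := Module.finBasis ℝ (LinearMap.range W.mulVecLin)
  refine ⟨Matrix.of fun l i => (bs i : Fin m → ℝ) l,
    Matrix.of fun i j => bs.repr ⟨W.mulVecLin (Pi.single j 1), LinearMap.mem_range_self _ _⟩ i,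
    ?_, ?_⟩
  · ext l j
    have h := congrArg (fun v : LinearMap.range W.mulVecLin => (v : Fin m → ℝ) l)
      (bs.sum_repr ⟨W.mulVecLin (Pi.single j 1), LinearMap.mem_range_self _ _⟩)
    simp only [Submodule.coe_sum, Submodule.coe_smul, Finset.sum_apply, Pi.smul_apply,
      smul_eq_mul, Matrix.mulVecLin_apply, Matrix.mulVec_single_one, Matrix.col_apply] at h
    rw [Matrix.mul_apply, ← h]
    simp only [Matrix.of_apply]
    exact Finset.sum_congr rfl fun i _ => by
      simp only [Matrix.mulVecLin_apply, Matrix.mulVec_single_one]; ring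
  · intro a ha
    have h0 : ∑ i, a i • bs i = 0 := by
      apply Subtype.ext
      funext l
      have := congrFun ha l
      simp only [Matrix.mulVec, dotProduct, Matrix.of_apply, Pi.zero_apply] at this
      simp only [Submodule.coe_sum, Submodule.coe_smul, Finset.sum_apply, Pi.smul_apply,
        smul_eq_mul, Submodule.coe_zero, Pi.zero_apply]
      rw [← this]
      exact Finset.sum_congr rfl fun i _ => mul_comm _ _
    funext i
    exact Fintype.linearIndependent_iff.1 bs.linearIndependent a h0 i

lemma aux_trace {m : ℕ} (hm : 0 < m) (n : ℕ) (W : Matrix (Fin m) (Fin m) ℝ)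
    (hW : Module.finrank ℝ (LinearMap.range W.mulVecLin) ≤ n) (w : Fin m → ℝ)
    (hw0 : ∀ k, 0 ≤ w k) (hw1 : ∑ k, w k ≤ 1) (r K : ℝ) (hr : 2 < r) (hK : 0 ≤ K)
    (H : ∀ (x : Fin m → ℝ) (M : ℝ), 0 ≤ M → (∀ l, |x l| ≤ M) → ∀ k,
      |W.mulVec x k| ≤ K * (∑ l, w l * (x l) ^ 2) ^ (1 / r) * M ^ (1 - 2 / r)) :
    W.trace ≤ 2 * (K * (n : ℝ) ^ (1 - 1 / r)) := by
  obtain ⟨F, G, hFG, hF⟩ := aux_factor W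
  generalize Module.finrank ℝ (LinearMap.range W.mulVecLin) = d at F G hFG hF hW
  obtain ⟨ν, hν0, hν1, hν⟩ := aux_dopt hm F hF
  let ρ : Fin m → ℝ := fun k => w k + ν k
  have hρ0 : ∀ k, 0 ≤ ρ k := fun k => add_nonneg (hw0 k) (hν0 k)
  have hνρ : ∀ x : Fin m → ℝ, ∑ k, ν k * x k ^ 2 ≤ ∑ k, ρ k * x k ^ 2 := fun x =>
    Finset.sum_le_sum fun k _ => mul_le_mul_of_nonneg_right (by simp [ρ, hw0 k]) (sq_nonneg _)
  have hwρ : ∀ x : Fin m → ℝ, ∑ k, w k * x k ^ 2 ≤ ∑ k, ρ k * x k ^ 2 := fun x =>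
    Finset.sum_le_sum fun k _ => mul_le_mul_of_nonneg_right (by simp [ρ, hν0 k]) (sq_nonneg _)
  obtain ⟨B, hB, hBM⟩ := aux_normalize F ρ hρ0 (by
    intro a ha
    apply hF
    funext k
    have h1 := hν a k
    have h2 := hνρ (F.mulVec a)
    rw [ha] at h2
    have h3 : (F.mulVec a k) ^ 2 ≤ 0 :=
      h1.trans (mul_nonpos_of_nonneg_of_nonpos (Nat.cast_nonneg _) h2)
    exact pow_eq_zero_iff (two_ne_zero) |>.1 (le_antisymm h3 (sq_nonneg _)))
  set A := F * B⁻¹ with hA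
  have hA1 : auxGram A ρ = 1 := auxGram_mul F ρ B hB hBM
  have hquad : ∀ c, ∑ k, ρ k * (A.mulVec c k) ^ 2 = c ⬝ᵥ c := by
    intro c; rw [← auxGram_quad, hA1, Matrix.one_mulVec]
  have hAc : ∀ c l, (A.mulVec c l) ^ 2 ≤ n * (c ⬝ᵥ c) := by
    intro c l
    have h1 := hν (B⁻¹.mulVec c) l
    rw [Matrix.mulVec_mulVec, ← hA] at h1
    refine h1.trans ?_
    rw [← hquad c]
    have hdn : (d : ℝ) ≤ n := by exact_mod_cast hW
    exact mul_le_mul hdn (hνρ _) (Finset.sum_nonneg fun k _ => mul_nonneg (hν0 k) (sq_nonneg _))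
      (Nat.cast_nonneg _)
  have hWA : W = A * (B * G) := by
    rw [hA, Matrix.mul_assoc, ← Matrix.mul_assoc B⁻¹, Matrix.nonsing_inv_mul _ hB.isUnit,
      Matrix.one_mul, hFG]
  have htr : W.trace = ∑ k, ρ k * A.mulVec ((W * A) k) k := by
    have e1 : W.trace = (auxGram A ρ * (B * G * A)).trace := by
      rw [hA1, Matrix.one_mul, Matrix.trace_mul_comm, ← hWA]
    have e2 : auxGram A ρ * (B * G * A) = A.transpose * (Matrix.diagonal ρ * (W * A)) := by
      conv_rhs => rw [hWA]
      simp only [auxGram, Matrix.mul_assoc]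
    rw [e1, e2, Matrix.trace_mul_comm, Matrix.trace]
    refine Finset.sum_congr rfl fun k _ => ?_
    rw [Matrix.diag_apply, Matrix.mul_apply, Matrix.mulVec, dotProduct, Finset.mul_sum]
    refine Finset.sum_congr rfl fun i _ => ?_
    rw [Matrix.diagonal_mul, Matrix.transpose_apply]
    ring
  have hr0 : 0 < r := by linarith
  have hir : 1 / r < 1 / 2 := one_div_lt_one_div_of_lt (by norm_num) hr
  have hir0 : 0 < 1 / r := by positivity
  have hn0 : (0 : ℝ) ≤ n := Nat.cast_nonneg _
  have hbound : ∀ k, A.mulVec ((W * A) k) k ≤ K * (n : ℝ) ^ (1 - 1 / r) := by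
    intro k
    set c := (W * A) k with hc
    set t := c ⬝ᵥ c with ht
    have ht0 : 0 ≤ t := Finset.sum_nonneg fun i _ => mul_self_nonneg _
    have hx : ∀ l, |A.mulVec c l| ≤ Real.sqrt (n * t) := fun l => Real.abs_le_sqrt (hAc c l)
    have h1 := H (A.mulVec c) (Real.sqrt (n * t)) (Real.sqrt_nonneg _) hx k
    have e1 : W.mulVec (A.mulVec c) k = t := by
      rw [Matrix.mulVec_mulVec]; rfl
    rw [e1, abs_of_nonneg ht0] at h1
    have h2 : (∑ l, w l * (A.mulVec c l) ^ 2) ^ (1 / r) ≤ t ^ (1 / r) := by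
      refine Real.rpow_le_rpow (Finset.sum_nonneg fun k _ => mul_nonneg (hw0 k) (sq_nonneg _)) ?_
        hir0.le
      rw [ht, ← hquad c]; exact hwρ _
    have e2 : Real.sqrt (n * t) ^ (1 - 2 / r) = (n : ℝ) ^ (1 / 2 - 1 / r) * t ^ (1 / 2 - 1 / r) := by
      rw [Real.sqrt_eq_rpow, ← Real.rpow_mul (by positivity), ← Real.mul_rpow hn0 ht0]
      congr 1; ring
    have h3 : t ≤ K * (n : ℝ) ^ (1 / 2 - 1 / r) * Real.sqrt t := by
      calc t ≤ K * t ^ (1 / r) * Real.sqrt (n * t) ^ (1 - 2 / r) := by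
            refine h1.trans ?_
            gcongr
        _ = K * (n : ℝ) ^ (1 / 2 - 1 / r) * (t ^ (1 / r) * t ^ (1 / 2 - 1 / r)) := by
            rw [e2]; ring
        _ = K * (n : ℝ) ^ (1 / 2 - 1 / r) * Real.sqrt t := by
            rw [← Real.rpow_add_of_nonneg ht0 hir0.le (by linarith), Real.sqrt_eq_rpow]
            congr 2; ring
    have h4 : Real.sqrt t ≤ K * (n : ℝ) ^ (1 / 2 - 1 / r) := by
      by_cases h0 : Real.sqrt t = 0
      · rw [h0]; positivity
      · have hp : 0 < Real.sqrt t := lt_of_le_of_ne (Real.sqrt_nonneg _) (Ne.symm h0)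
        refine le_of_mul_le_mul_right ?_ hp
        rw [Real.mul_self_sqrt ht0]; exact h3
    calc A.mulVec c k ≤ Real.sqrt (n * t) := (le_abs_self _).trans (hx k)
      _ = Real.sqrt n * Real.sqrt t := Real.sqrt_mul hn0 _
      _ ≤ Real.sqrt n * (K * (n : ℝ) ^ (1 / 2 - 1 / r)) := by gcongr
      _ = K * ((n : ℝ) ^ (1 / 2 : ℝ) * (n : ℝ) ^ (1 / 2 - 1 / r)) := by
          rw [Real.sqrt_eq_rpow]; ring
      _ = K * (n : ℝ) ^ (1 - 1 / r) := by
          rw [← Real.rpow_add_of_nonneg hn0 (by norm_num) (by linarith)]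
          congr 2; ring
  rw [htr]
  calc ∑ k, ρ k * A.mulVec ((W * A) k) k ≤ ∑ k, ρ k * (K * (n : ℝ) ^ (1 - 1 / r)) :=
        Finset.sum_le_sum fun k _ => mul_le_mul_of_nonneg_left (hbound k) (hρ0 k)
    _ = (∑ k, ρ k) * (K * (n : ℝ) ^ (1 - 1 / r)) := by rw [Finset.sum_mul]
    _ ≤ 2 * (K * (n : ℝ) ^ (1 - 1 / r)) := by
        refine mul_le_mul_of_nonneg_right ?_ (by positivity)
        simp only [ρ, Finset.sum_add_distrib]; linarith

lemma aux_flat {Y : Type*} [NormedAddCommGroup Y] [NormedSpace ℝ Y] (m : ℕ) (y : Fin m → Y)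
    (r C : ℝ) (hr : 1 < r) (hC : 0 < C)
    (H : ∀ (N : ℕ) (z : Fin N → Fin m → ℝ), (∀ k, ∑ i, |z i k| ≤ 1) →
      ∑ i, ‖∑ k, z i k • y k‖ ^ r ≤ C) :
    ∃ w : Fin m → ℝ, (∀ k, 0 ≤ w k) ∧ ∑ k, w k ≤ (r + 1) * C ∧
      ∀ x : Fin m → ℝ, (∀ k, x k = 0 ∨ (1 / 2 < |x k| ∧ |x k| ≤ 1)) →
        ‖∑ k, x k • y k‖ ^ r ≤ 2 * ∑ k, w k * x k ^ 2 := by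
  have hm1 : (0 : ℝ) < m + 1 := by positivity
  set δ := C / (2 * (m + 1)) with hδ
  have hδ0 : 0 < δ := by positivity
  obtain ⟨p, hp0, hp1, hp⟩ := aux_pisier m y r C hr H δ hδ0
  have hr0 : 0 < r := by linarith
  refine ⟨fun k => r * p k + 2 * δ, fun k => by have := hp0 k; positivity, ?_, ?_⟩
  · rw [Finset.sum_add_distrib, ← Finset.mul_sum]
    simp only [Finset.sum_const, Finset.card_univ, Fintype.card_fin, nsmul_eq_mul]
    have h1 : r * ∑ k, p k ≤ r * C := mul_le_mul_of_nonneg_left hp1 hr0.le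
    have h2 : (m : ℝ) * (2 * δ) ≤ C := by
      have : δ * (2 * (m + 1)) = C := by rw [hδ]; field_simp
      nlinarith
    linarith
  · intro x hx
    by_cases hx0 : ∀ k, x k = 0
    · simp [hx0, Real.zero_rpow hr0.ne']
    · push Not at hx0
      obtain ⟨k₀, hk₀⟩ := hx0
      have h1 := hp x (fun k => by
        rcases hx k with h | h
        · simp [h]
        · exact h.2)
      have h2 : δ ≤ ∑ k, 2 * δ * |x k| := by
        have := Finset.single_le_sum (f := fun k => 2 * δ * |x k|) (fun k _ => by positivity)
          (Finset.mem_univ k₀)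
        refine le_trans ?_ this
        have := ((hx k₀).resolve_left hk₀).1
        nlinarith
      have h3 : ∑ k, (r * p k + 2 * δ) * |x k| = r * ∑ k, p k * |x k| + ∑ k, 2 * δ * |x k| := by
        rw [Finset.mul_sum, ← Finset.sum_add_distrib]
        exact Finset.sum_congr rfl fun k _ => by ring
      have h4 : ∑ k, (r * p k + 2 * δ) * |x k| ≤ 2 * ∑ k, (r * p k + 2 * δ) * x k ^ 2 := by
        rw [Finset.mul_sum]
        refine Finset.sum_le_sum fun k _ => ?_
        have hw : 0 ≤ r * p k + 2 * δ := by have := hp0 k; positivity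
        have : |x k| ≤ 2 * x k ^ 2 := by
          rcases hx k with h | h
          · simp [h]
          · rw [← sq_abs]; nlinarith [h.1, abs_nonneg (x k)]
        nlinarith
      linarith

lemma aux_geom (r r' : ℝ) (hr : 2 < r) (hrr : 1 / r + 1 / r' = 1) (J : ℕ) :
    (∑ j ∈ Finset.range J, (((2 : ℝ) ^ (-(1 - 2 / r))) ^ j) ^ r') ^ (1 / r') ≤
      (1 / 2 - 1 / r) ^ (-(1 / r')) := by
  have hr0 : 0 < r := by linarith
  have hir : 1 / r < 1 / 2 := one_div_lt_one_div_of_lt (by norm_num) hr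
  have hir0 : 0 < 1 / r := by positivity
  have hi' : 1 / r' = 1 - 1 / r := by linarith
  have hr'0 : 0 < r' := by
    have : 0 < 1 / r' := by linarith
    exact one_div_pos.1 this
  set b := 1 / 2 - 1 / r with hb
  have hb0 : 0 < b := by linarith
  set τ := 2 * b * r' with hτ
  have hmul : r' * (1 - 1 / r) = 1 := by rw [← hi']; field_simp
  have hr'1 : 1 ≤ r' := by nlinarith
  have hτ0 : 0 ≤ τ := by positivity
  have hτ1 : τ ≤ 1 := by rw [hτ, hb]; nlinarith
  have h2 : (2 : ℝ) ^ (-τ) ≤ 1 - τ / 2 := by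
    have := rpow_one_add_le_one_add_mul_self (s := -(1 / 2 : ℝ)) (by norm_num) hτ0 hτ1
    rw [Real.rpow_neg (by norm_num), ← Real.inv_rpow (by norm_num)]
    norm_num at this ⊢
    linarith
  have hbτ : b ≤ τ / 2 := by rw [hτ]; nlinarith
  set q := (2 : ℝ) ^ (-τ) with hq
  have hq0 : 0 < q := by positivity
  have e : ∀ j : ℕ, (((2 : ℝ) ^ (-(1 - 2 / r))) ^ j) ^ r' = q ^ j := by
    intro j
    rw [← Real.rpow_natCast, ← Real.rpow_natCast, ← Real.rpow_mul (by positivity),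
      ← Real.rpow_mul (by positivity), ← Real.rpow_mul (by positivity)]
    congr 1
    rw [hτ, hb]; ring
  simp only [e]
  have h3 : ∑ j ∈ Finset.range J, q ^ j ≤ b⁻¹ := by
    have hq1 : q < 1 := by linarith
    have hg := geom_sum_mul_neg q J
    have hqJ : 0 < q ^ J := by positivity
    have hS : 0 ≤ ∑ j ∈ Finset.range J, q ^ j := Finset.sum_nonneg fun j _ => by positivity
    rw [← one_div, le_div_iff₀ hb0]
    nlinarith
  rw [Real.rpow_neg hb0.le, ← Real.inv_rpow hb0.le]
  exact Real.rpow_le_rpow (Finset.sum_nonneg fun j _ => by positivity) h3 (by positivity)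

lemma aux_level {Y : Type*} [NormedAddCommGroup Y] [NormedSpace ℝ Y] (m : ℕ) (y : Fin m → Y)
    (r r' : ℝ) (hr : 2 < r) (hrr : 1 / r + 1 / r' = 1) (w : Fin m → ℝ) (hw : ∀ k, 0 ≤ w k)
    (H : ∀ x : Fin m → ℝ, (∀ k, x k = 0 ∨ (1 / 2 < |x k| ∧ |x k| ≤ 1)) →
        ‖∑ k, x k • y k‖ ^ r ≤ 2 * ∑ k, w k * x k ^ 2)
    (x : Fin m → ℝ) (hx : ∀ k, |x k| ≤ 1) :
    ‖∑ k, x k • y k‖ ≤ (1 / 2 - 1 / r) ^ (-(1 / r')) * (2 * ∑ k, w k * x k ^ 2) ^ (1 / r) := by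
  have hr0 : 0 < r := by linarith
  have hlev : ∀ k, ∃ j : ℕ, x k = 0 ∨ ((1 / 2 : ℝ) ^ (j + 1) < |x k| ∧ |x k| ≤ (1 / 2) ^ j) := by
    intro k
    by_cases h : x k = 0
    · exact ⟨0, Or.inl h⟩
    · obtain ⟨j, hj⟩ := exists_nat_pow_near_of_lt_one (abs_pos.2 h) (hx k)
        (by norm_num : (0 : ℝ) < 1 / 2) (by norm_num)
      exact ⟨j, Or.inr hj⟩
  choose lv hlv using hlev
  let J := Finset.univ.sup lv + 1
  have hlt : ∀ k, lv k ∈ Finset.range J := fun k =>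
    Finset.mem_range.2 (Nat.lt_succ_of_le (Finset.le_sup (Finset.mem_univ k)))
  let X : ℕ → Fin m → ℝ := fun j k => if lv k = j then x k else 0
  let s : ℕ → ℝ := fun j => 2 * ∑ k, w k * X j k ^ 2
  have hs0 : ∀ j, 0 ≤ s j := fun j =>
    mul_nonneg (by norm_num) (Finset.sum_nonneg fun k _ => mul_nonneg (hw k) (sq_nonneg _))
  have hsum : ∑ j ∈ Finset.range J, s j = 2 * ∑ k, w k * x k ^ 2 := by
    simp only [s, ← Finset.mul_sum]
    rw [Finset.sum_comm]
    congr 1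
    refine Finset.sum_congr rfl fun k _ => ?_
    rw [← Finset.mul_sum]
    congr 1
    simp only [X, ite_pow]
    rw [Finset.sum_eq_single (lv k)]
    · simp
    · intro j _ hj; simp [Ne.symm hj]
    · intro h; exact absurd (hlt k) h
  have hdec : ∑ k, x k • y k = ∑ j ∈ Finset.range J, ∑ k, X j k • y k := by
    rw [Finset.sum_comm]
    refine Finset.sum_congr rfl fun k _ => ?_
    rw [← Finset.sum_smul]
    congr 1
    simp only [X]
    rw [Finset.sum_ite_eq, if_pos (hlt k)]
  set θ := (2 : ℝ) ^ (-(1 - 2 / r)) with hθ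
  have hθ0 : 0 < θ := by positivity
  have hj : ∀ j, ‖∑ k, X j k • y k‖ ≤ θ ^ j * s j ^ (1 / r) := by
    intro j
    have h1 := H (fun k => 2 ^ j * X j k) (by
      intro k
      by_cases h : lv k = j
      · rcases hlv k with h0 | h0
        · left; simp [X, h0]
        · right
          simp only [X, h, if_true, abs_mul, abs_pow, abs_two]
          rw [h] at h0
          have e1 : (2 : ℝ) ^ j * (1 / 2) ^ j = 1 := by rw [← mul_pow]; norm_num
          have hp : (0 : ℝ) < 2 ^ j := by positivity
          constructor
          · have := mul_lt_mul_of_pos_left h0.1 hp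
            rw [pow_succ, ← mul_assoc, e1] at this
            linarith
          · have := mul_le_mul_of_nonneg_left h0.2 hp.le
            linarith
      · left; simp [X, h])
    have e1 : ∑ k, ((2 : ℝ) ^ j * X j k) • y k = (2 : ℝ) ^ j • ∑ k, X j k • y k := by
      rw [Finset.smul_sum]
      exact Finset.sum_congr rfl fun k _ => by rw [smul_smul]
    have e2 : 2 * ∑ k, w k * ((2 : ℝ) ^ j * X j k) ^ 2 = ((2 : ℝ) ^ j) ^ 2 * s j := by
      simp only [s, Finset.mul_sum]
      exact Finset.sum_congr rfl fun k _ => by ring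
    rw [e1, e2, norm_smul, Real.norm_of_nonneg (by positivity)] at h1
    have h2 := Real.rpow_le_rpow (by positivity) h1 (show 0 ≤ 1 / r by positivity)
    rw [← Real.rpow_mul (by positivity), mul_one_div_cancel hr0.ne', Real.rpow_one,
      Real.mul_rpow (by positivity) (hs0 j)] at h2
    have e3 : (((2 : ℝ) ^ j) ^ 2) ^ (1 / r) = 2 ^ j * θ ^ j := by
      rw [hθ, ← Real.rpow_natCast, ← Real.rpow_natCast, ← Real.rpow_natCast,
        ← Real.rpow_mul (by norm_num), ← Real.rpow_mul (by norm_num), ← Real.rpow_mul (by norm_num),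
        ← Real.rpow_add (by norm_num)]
      congr 1
      push_cast
      ring
    rw [e3, mul_assoc] at h2
    exact le_of_mul_le_mul_left h2 (by positivity)
  have hc : r'.HolderConjugate r := by
    rw [Real.holderConjugate_iff]
    have hir0 : 0 < 1 / r := by positivity
    have hir : 1 / r < 1 / 2 := one_div_lt_one_div_of_lt (by norm_num) hr
    have hi' : 1 / r' = 1 - 1 / r := by linarith
    have hr'0 : 0 < r' := one_div_pos.1 (by linarith)
    have hmul : r' * (1 - 1 / r) = 1 := by rw [← hi']; field_simp
    refine ⟨by nlinarith, ?_⟩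
    rw [← one_div, ← one_div]; linarith
  rw [hdec]
  refine (norm_sum_le _ _).trans ((Finset.sum_le_sum fun j _ => hj j).trans ?_)
  refine (Real.inner_le_Lp_mul_Lq_of_nonneg _ hc (fun j _ => by positivity)
    (fun j _ => Real.rpow_nonneg (hs0 j) _)).trans ?_
  have e4 : ∀ j, (s j ^ (1 / r)) ^ r = s j := by
    intro j
    rw [← Real.rpow_mul (hs0 j), one_div_mul_cancel hr0.ne', Real.rpow_one]
  simp only [e4, hsum]
  refine mul_le_mul_of_nonneg_right (aux_geom r r' hr hrr J) (Real.rpow_nonneg ?_ _)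
  rw [← hsum]; exact Finset.sum_nonneg fun j _ => hs0 j

lemma aux_main {Y : Type*} [NormedAddCommGroup Y] [NormedSpace ℝ Y] (m n : ℕ) (y : Fin m → Y)
    (R : Submodule ℝ Y) [FiniteDimensional ℝ R] (hR : Module.finrank ℝ R ≤ n) (hy : ∀ k, y k ∈ R)
    (r r' : ℝ) (hr : 2 < r) (hrr : 1 / r + 1 / r' = 1) (C : ℝ) (hC : 0 ≤ C)
    (H : ∀ (N : ℕ) (z : Fin N → Fin m → ℝ), (∀ k, ∑ i, |z i k| ≤ 1) →
      ∑ i, ‖∑ k, z i k • y k‖ ^ r ≤ C ^ r) :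
    ∑ k, ‖y k‖ ≤ 8 * (1 / 2 - 1 / r) ^ (-(1 / r')) * (n : ℝ) ^ (1 / r') * C := by
  have hr0 : 0 < r := by linarith
  have hir : 1 / r < 1 / 2 := one_div_lt_one_div_of_lt (by norm_num) hr
  have hb0 : 0 < 1 / 2 - 1 / r := by linarith
  have hi' : 1 / r' = 1 - 1 / r := by linarith
  have hrhs : 0 ≤ 8 * (1 / 2 - 1 / r) ^ (-(1 / r')) * (n : ℝ) ^ (1 / r') * C := by positivity
  rcases Nat.eq_zero_or_pos m with hm | hm
  · subst hm; simpa using hrhs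
  rcases hC.eq_or_lt with hC0 | hCpos
  · have : ∀ k, ‖y k‖ = 0 := by
      intro k
      have h := H 1 (fun _ => Pi.single k 1) (by
        intro l
        by_cases hl : l = k <;> simp [Pi.single_apply, hl])
      rw [← hC0, Real.zero_rpow hr0.ne'] at h
      simp [Pi.single_apply] at h
      have h2 := le_antisymm h (Real.rpow_nonneg (norm_nonneg _) _)
      exact (Real.rpow_eq_zero (norm_nonneg _) hr0.ne').1 h2
    simp only [this, Finset.sum_const_zero]
    exact hrhs
  obtain ⟨v, hv0, hv1, hv⟩ := aux_flat m y r (C ^ r) (by linarith) (by positivity) H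
  set Λ := (r + 1) * C ^ r with hΛ
  have hΛ0 : 0 < Λ := by positivity
  set β := (1 / 2 - 1 / r) ^ (-(1 / r')) with hβ
  have hβ0 : 0 < β := by positivity
  let w : Fin m → ℝ := fun k => v k / Λ
  have hw0 : ∀ k, 0 ≤ w k := fun k => div_nonneg (hv0 k) hΛ0.le
  have hw1 : ∑ k, w k ≤ 1 := by
    simp only [w, ← Finset.sum_div]
    rwa [div_le_one hΛ0]
  have hvw : ∀ x : Fin m → ℝ, 2 * ∑ k, v k * x k ^ 2 = (2 * Λ) * ∑ k, w k * x k ^ 2 := by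
    intro x
    simp only [Finset.mul_sum, w]
    exact Finset.sum_congr rfl fun k _ => by field_simp
  have hw0s : ∀ x : Fin m → ℝ, 0 ≤ ∑ k, w k * x k ^ 2 := fun x =>
    Finset.sum_nonneg fun k _ => mul_nonneg (hw0 k) (sq_nonneg _)
  set K := β * (2 * Λ) ^ (1 / r) with hK
  have hK0 : 0 ≤ K := by positivity
  have hKC : K ≤ 4 * β * C := by
    have h1 : (2 * Λ) ^ (1 / r) ≤ ((4 * C) ^ r) ^ (1 / r) := by
      apply Real.rpow_le_rpow (by positivity) _ (by positivity)
      rw [Real.mul_rpow (by norm_num) hC, hΛ]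
      have h2 : 2 * (r + 1) ≤ (4 : ℝ) ^ r := by
        have := one_add_mul_self_le_rpow_one_add (s := (3 : ℝ)) (by norm_num) (p := r) (by linarith)
        norm_num at this
        linarith
      have h3 : 0 < C ^ r := by positivity
      nlinarith
    rw [← Real.rpow_mul (by positivity), mul_one_div_cancel hr0.ne', Real.rpow_one] at h1
    rw [hK]; nlinarith
  have hu : ∀ (x : Fin m → ℝ) (M : ℝ), 0 ≤ M → (∀ l, |x l| ≤ M) →
      ‖∑ k, x k • y k‖ ≤ K * (∑ l, w l * (x l) ^ 2) ^ (1 / r) * M ^ (1 - 2 / r) := by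
    intro x M hM hx
    rcases hM.eq_or_lt with h0 | hMp
    · have : ∀ l, x l = 0 := fun l => by
        have := hx l
        rw [← h0] at this
        exact abs_eq_zero.1 (le_antisymm this (abs_nonneg _))
      have e0 : ∑ k, x k • y k = 0 := by simp [this]
      rw [e0, norm_zero]
      exact mul_nonneg (mul_nonneg hK0 (Real.rpow_nonneg (hw0s x) _)) (Real.rpow_nonneg hM _)
    · have h1 := aux_level m y r r' hr hrr v hv0 hv (fun k => M⁻¹ * x k) (by
        intro k
        rw [abs_mul, abs_of_pos (inv_pos.2 hMp), inv_mul_le_iff₀ hMp, mul_one]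
        exact hx k)
      have e1 : ∑ k, (M⁻¹ * x k) • y k = M⁻¹ • ∑ k, x k • y k := by
        rw [Finset.smul_sum]
        exact Finset.sum_congr rfl fun k _ => by rw [smul_smul]
      have e2 : ∑ k, w k * (M⁻¹ * x k) ^ 2 = (M ^ 2)⁻¹ * ∑ k, w k * x k ^ 2 := by
        rw [Finset.mul_sum]
        exact Finset.sum_congr rfl fun k _ => by ring
      rw [e1, hvw, e2, norm_smul, norm_inv, Real.norm_of_nonneg hM, inv_mul_le_iff₀ hMp] at h1
      refine h1.trans (le_of_eq ?_)
      rw [Real.mul_rpow (by positivity) (mul_nonneg (by positivity) (hw0s x)),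
        Real.mul_rpow (by positivity) (hw0s x)]
      have e3 : M ^ (1 - 2 / r) = M * ((M ^ 2)⁻¹) ^ (1 / r) := by
        rw [Real.rpow_sub hMp, Real.rpow_one, Real.inv_rpow (by positivity), ← Real.rpow_natCast,
          ← Real.rpow_mul hM, div_eq_mul_inv]
        congr 3
        push_cast; ring
      rw [e3, hK]
      ring
  choose g hg1 hg2 using fun k => exists_dual_vector'' ℝ (y k)
  let V : Y →ₗ[ℝ] (Fin m → ℝ) := LinearMap.pi fun k => (g k : Y →ₗ[ℝ] ℝ)
  let W : Matrix (Fin m) (Fin m) ℝ := Matrix.of fun k l => g k (y l)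
  have hWV : ∀ x, W.mulVec x = V (∑ l, x l • y l) := by
    intro x
    funext k
    simp [W, V, Matrix.mulVec, dotProduct, mul_comm]
  have hrank : Module.finrank ℝ (LinearMap.range W.mulVecLin) ≤ n := by
    have hle : LinearMap.range W.mulVecLin ≤ R.map V := by
      rintro _ ⟨x, rfl⟩
      rw [Matrix.mulVecLin_apply, hWV]
      exact Submodule.mem_map_of_mem (R.sum_mem fun l _ => R.smul_mem _ (hy l))
    exact (Submodule.finrank_mono hle).trans ((Submodule.finrank_map_le V R).trans hR)
  have htr := aux_trace hm n W hrank w hw0 hw1 r K hr hK0 (by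
    intro x M hM hx k
    refine le_trans ?_ (hu x M hM hx)
    rw [hWV]
    have := (g k).le_of_opNorm_le (hg1 k) (∑ l, x l • y l)
    simpa [V] using this)
  have e : W.trace = ∑ k, ‖y k‖ := by
    simp only [Matrix.trace, Matrix.diag_apply, W, Matrix.of_apply, hg2]
    simp
  rw [e] at htr
  refine htr.trans ?_
  rw [hi']
  have hn : 0 ≤ (n : ℝ) ^ (1 - 1 / r) := by positivity
  nlinarith [mul_le_mul_of_nonneg_right hKC hn]

/-- there is an absolute constant `c₀` such that for `2 < r < ∞`
with conjugate exponent `r'` and any absolutely `(r,1)`-summing operator `T` of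
rank at most `n`, `π_1(T) ≤ c₀ (1/2 - 1/r)^{-1/r'} n^{1/r'} π_{r,1}(T)`. -/
theorem statement10 :
    ∃ c₀ : ℝ, 0 < c₀ ∧
      ∀ (r r' : ℝ), 2 < r → 1 / r + 1 / r' = 1 →
        ∀ (n : ℕ) (X Y : Type*) [NormedAddCommGroup X] [NormedSpace ℝ X] [CompleteSpace X]
          [NormedAddCommGroup Y] [NormedSpace ℝ Y] [CompleteSpace Y]
          (T : X →L[ℝ] Y), RankLE T n → piPQ (ENNReal.ofReal r) 1 T < ∞ →
          piPQ 1 1 T ≤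
            ENNReal.ofReal (c₀ * (1 / 2 - 1 / r) ^ (-(1 / r')) * (n : ℝ) ^ (1 / r')) *
              piPQ (ENNReal.ofReal r) 1 T := by
  refine ⟨8, by norm_num, ?_⟩
  intro r r' hr hrr n X Y _ _ _ _ _ _ T hT hP
  have hr0 : 0 < r := by linarith
  set P := piPQ (ENNReal.ofReal r) 1 T with hPdef
  obtain ⟨hfd, hrk⟩ := hT
  have hPC : P = ENNReal.ofReal P.toReal := (ENNReal.ofReal_toReal hP.ne).symm
  have hw : ∀ {N : ℕ} (x : Fin N → X), weakLq 1 x ≤ 1 ↔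
      ∀ f : X →L[ℝ] ℝ, ‖f‖ ≤ 1 → ∑ k, |f (x k)| ≤ 1 := by
    intro N x
    unfold weakLq
    rw [iSup_le_iff]
    have : ∀ f : X →L[ℝ] ℝ, (eSum 1 fun k => ENNReal.ofReal |f (x k)|) ≤ 1 ↔
        ∑ k, |f (x k)| ≤ 1 := by
      intro f
      simp only [eSum, ENNReal.one_ne_top, if_false, ENNReal.toReal_one, ENNReal.rpow_one, div_one]
      rw [← ENNReal.ofReal_sum_of_nonneg (fun k _ => abs_nonneg _), ENNReal.ofReal_le_one]
    constructor
    · intro h f hf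
      exact (this f).1 (h ⟨f, hf⟩)
    · rintro h ⟨f, hf⟩
      exact (this f).2 (h f hf)
  have hsum : ∀ (N : ℕ) (x : Fin N → X), (∀ f : X →L[ℝ] ℝ, ‖f‖ ≤ 1 → ∑ k, |f (x k)| ≤ 1) →
      ∑ k, ‖T (x k)‖ ^ r ≤ P.toReal ^ r := by
    intro N x hx
    have h1 : (eSum (ENNReal.ofReal r) fun k => ENNReal.ofReal ‖T (x k)‖) ≤ P := by
      rw [hPdef]
      unfold piPQ
      refine le_trans ?_ (le_iSup _ N)
      unfold piN
      exact le_iSup (fun x : {x : Fin N → X // weakLq 1 x ≤ 1} =>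
        eSum (ENNReal.ofReal r) fun k => ENNReal.ofReal ‖T (x.1 k)‖) ⟨x, (hw x).2 hx⟩
    simp only [eSum, ENNReal.ofReal_ne_top, if_false, ENNReal.toReal_ofReal hr0.le] at h1
    rw [one_div, ENNReal.rpow_inv_le_iff hr0, hPC,
      ENNReal.ofReal_rpow_of_nonneg ENNReal.toReal_nonneg hr0.le] at h1
    simp only [ENNReal.ofReal_rpow_of_nonneg (norm_nonneg _) hr0.le] at h1
    rw [← ENNReal.ofReal_sum_of_nonneg (fun k _ => Real.rpow_nonneg (norm_nonneg _) _)] at h1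
    exact (ENNReal.ofReal_le_ofReal_iff (Real.rpow_nonneg ENNReal.toReal_nonneg _)).1 h1
  have hb0 : 0 < 1 / 2 - 1 / r := by
    have : 1 / r < 1 / 2 := one_div_lt_one_div_of_lt (by norm_num) hr
    linarith
  rw [hPC, ← ENNReal.ofReal_mul (by positivity)]
  refine iSup_le fun m => iSup_le ?_
  rintro ⟨x, hx⟩
  rw [hw] at hx
  simp only [eSum, ENNReal.one_ne_top, if_false, ENNReal.toReal_one, ENNReal.rpow_one, div_one]
  rw [← ENNReal.ofReal_sum_of_nonneg (fun k _ => norm_nonneg _)]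
  apply ENNReal.ofReal_le_ofReal
  haveI := hfd
  refine aux_main m n (fun k => T (x k)) _ hrk (fun k => LinearMap.mem_range_self _ (x k))
    r r' hr hrr P.toReal ENNReal.toReal_nonneg ?_
  intro N z hz
  have h := hsum N (fun i => ∑ k, z i k • x k) (by
    intro f hf
    calc ∑ i, |f (∑ k, z i k • x k)| ≤ ∑ i, ∑ k, |z i k| * |f (x k)| := by
          refine Finset.sum_le_sum fun i _ => ?_
          rw [map_sum]
          refine (Finset.abs_sum_le_sum_abs _ _).trans (le_of_eq ?_)
          exact Finset.sum_congr rfl fun k _ => by rw [map_smul, smul_eq_mul, abs_mul]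
      _ = ∑ k, (∑ i, |z i k|) * |f (x k)| := by
          rw [Finset.sum_comm]
          exact Finset.sum_congr rfl fun k _ => by rw [Finset.sum_mul]
      _ ≤ ∑ k, |f (x k)| :=
          Finset.sum_le_sum fun k _ => mul_le_of_le_one_left (abs_nonneg _) (hz k)
      _ ≤ 1 := hx f hf)
  simpa only [map_sum, map_smul] using h


end
end

section
/- Let 1 ≤ q ≤ 2, let q' be the conjugate exponent of q, let 2 ≤ r ≤ q', and define p by 1/q = 1/p + 1/r. There is an absolute constant c₀ such that for every bounded linear operator T : X → Y between real Banach spaces of rank at most n one has π_{p,q}(T) ≤ c₀^{r/p} · π_{p,q}^{m}(T), where m = ⌊n^{1 + r(1/q − 1/2)}⌋. -/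
open scoped ENNReal NNReal BigOperators

noncomputable section

theorem sum_rpow_le (γ : ℝ) (h0 : 0 < γ) (h1 : γ ≤ 1) (n : ℕ) :
    ∑ k ∈ Finset.range n, ((k:ℝ)+1)^(γ-1) ≤ (n:ℝ)^γ/γ := by
  induction n with
  | zero => simp [Real.zero_rpow h0.ne']
  | succ n ih =>
    rw [Finset.sum_range_succ]
    have hn : (0:ℝ) < (n:ℝ)+1 := by positivity
    have hb := rpow_one_add_le_one_add_mul_self (s := -(1/((n:ℝ)+1))) (p := γ)
      (by
        have : 1/((n:ℝ)+1) ≤ 1 := by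
          rw [div_le_one hn]; linarith [(Nat.cast_nonneg n : (0:ℝ) ≤ n)]
        linarith) h0.le h1
    have e1 : (n:ℝ) = ((n:ℝ)+1) * (1 + -(1/((n:ℝ)+1))) := by field_simp; ring
    have e2 : (n:ℝ)^γ = ((n:ℝ)+1)^γ * (1 + -(1/((n:ℝ)+1)))^γ := by
      conv_lhs => rw [e1]
      apply Real.mul_rpow hn.le
      have : 1/((n:ℝ)+1) ≤ 1 := by
          rw [div_le_one hn]; linarith [(Nat.cast_nonneg n : (0:ℝ) ≤ n)]
      linarith
    have e3 : ((n:ℝ)+1)^(γ-1) = ((n:ℝ)+1)^γ / ((n:ℝ)+1) := Real.rpow_sub_one hn.ne' γ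
    have hp : 0 < ((n:ℝ)+1)^γ := by positivity
    have : (n:ℝ)^γ + γ * ((n:ℝ)+1)^(γ-1) ≤ ((n:ℝ)+1)^γ := by
      rw [e2, e3]
      have := mul_le_mul_of_nonneg_left hb hp.le
      have e4 : γ * (((n:ℝ)+1)^γ / ((n:ℝ)+1)) = ((n:ℝ)+1)^γ * (γ * (1/((n:ℝ)+1))) := by ring
      rw [e4]; nlinarith
    push_cast
    rw [le_div_iff₀ h0] at *
    nlinarith

theorem greedy {V Y : Type*} [NormedAddCommGroup V] [InnerProductSpace ℝ V] [FiniteDimensional ℝ V]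
    [NormedAddCommGroup Y] [NormedSpace ℝ Y] (L : V →ₗ[ℝ] Y) (d : ℕ)
    (hd : d ≤ Module.finrank ℝ V) :
    ∃ h : Fin d → V, Orthonormal ℝ h ∧
      ∀ (j : Fin d) (v : V), (∀ i, i < j → inner ℝ (h i) v = 0) → ‖L v‖ ≤ ‖L (h j)‖ * ‖v‖ := by
  induction d with
  | zero => exact ⟨Fin.elim0, ⟨fun i => i.elim0, fun i => i.elim0⟩, fun j => j.elim0⟩
  | succ d ih =>
    obtain ⟨h, ho, hh⟩ := ih (by omega)
    let U : Submodule ℝ V := (Submodule.span ℝ (Set.range h))ᗮ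
    have hU : U ≠ ⊥ := by
      intro hb
      have h1 : Submodule.span ℝ (Set.range h) = ⊤ := Submodule.orthogonal_eq_bot_iff.mp hb
      have h2 := finrank_span_eq_card ho.linearIndependent
      rw [h1, finrank_top, Fintype.card_fin] at h2
      omega
    obtain ⟨u, huU, hu0⟩ := Submodule.exists_mem_ne_zero_of_ne_bot hU
    let K : Set V := Metric.sphere 0 1 ∩ U
    have hK : IsCompact K := (isCompact_sphere 0 1).inter_right (Submodule.closed_of_finiteDimensional U)
    have hKn : K.Nonempty := ⟨(‖u‖⁻¹) • u, by
      simp [norm_smul, norm_ne_zero_iff.mpr hu0], U.smul_mem _ huU⟩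
    have hc : Continuous fun v => ‖L v‖ := (LinearMap.continuous_of_finiteDimensional L).norm
    obtain ⟨z, ⟨hz1, hzU⟩, hz⟩ := hK.exists_isMaxOn hKn hc.continuousOn
    have hz1 : ‖z‖ = 1 := by simpa using hz1
    have hzo : ∀ i, inner ℝ (h i) z = 0 := fun i =>
      (Submodule.mem_orthogonal _ _).mp hzU _ (Submodule.subset_span ⟨i, rfl⟩)
    refine ⟨Fin.snoc h z, ?_, ?_⟩
    · rw [orthonormal_iff_ite]
      rw [orthonormal_iff_ite] at ho
      intro i j
      refine Fin.lastCases ?_ (fun i => ?_) i <;> refine Fin.lastCases ?_ (fun j => ?_) j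
      · simp [hz1]
      · simp [real_inner_comm (h _) z, hzo, (Fin.castSucc_ne_last _).symm]
      · simp [hzo, Fin.castSucc_ne_last]
      · simp [ho]
    · intro j v
      refine Fin.lastCases ?_ (fun j => ?_) j
      · intro hv
        simp only [Fin.snoc_last]
        by_cases hv0 : v = 0
        · simp [hv0]
        have hvU : v ∈ U := by
          rw [Submodule.mem_orthogonal]
          intro w hw
          induction hw using Submodule.span_induction with
          | mem x hx => 
            obtain ⟨i, rfl⟩ := hx
            simpa using hv i.castSucc (Fin.castSucc_lt_last i)
          | zero => simp
          | add x y _ _ hx hy => simp [inner_add_left, hx, hy]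
          | smul a x _ hx => simp [inner_smul_left, hx]
        have := hz (show (‖v‖⁻¹) • v ∈ K from ⟨by simp [norm_smul, norm_ne_zero_iff.mpr hv0], U.smul_mem _ hvU⟩)
        simp only [Set.mem_ofPred_eq, map_smul, norm_smul, norm_inv, norm_norm] at this
        rwa [inv_mul_le_iff₀ (norm_pos_iff.mpr hv0), mul_comm] at this
      · intro hv
        simp only [Fin.snoc_castSucc]
        apply hh
        intro i hi
        simpa using hv i.castSucc (by simpa using hi)

theorem lewis {V : Type*} [NormedAddCommGroup V] [InnerProductSpace ℝ V] [FiniteDimensional ℝ V]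
    {N : ℕ} (q : ℝ) (hq1 : 1 ≤ q) (hq2 : q ≤ 2) (φ : Fin N → V)
    (hs : Submodule.span ℝ (Set.range φ) = ⊤) :
    ∃ A : V ≃ₗ[ℝ] V, ∀ v : V,
      ∑ k, (‖A (φ k)‖ ^ (q - 2) * inner ℝ (A (φ k)) v) • A (φ k) = v := by
  rcases subsingleton_or_nontrivial V with hV | hV
  · exact ⟨LinearEquiv.refl ℝ V, fun v => Subsingleton.elim _ _⟩
  have hq0 : 0 < q := by linarith
  set d : ℕ := Module.finrank ℝ V with hd
  have hd0 : 0 < d := Module.finrank_pos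
  have hdR : (0:ℝ) < d := by exact_mod_cast hd0
  let S : (V →L[ℝ] V) → ℝ := fun A => ∑ k, ‖A (φ k)‖ ^ q
  have hScont : Continuous S := by
    refine continuous_finsetSum _ fun k _ => ?_
    exact ((ContinuousLinearMap.apply ℝ V (φ k)).continuous.norm).rpow_const (fun _ => Or.inr hq0.le)
  have hSnn : ∀ A, 0 ≤ S A := fun A => Finset.sum_nonneg fun k _ => by positivity
  have hSsmul : ∀ (c : ℝ) A, 0 ≤ c → S (c • A) = c ^ q * S A := by
    intro c A hc
    simp only [S, Finset.mul_sum]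
    refine Finset.sum_congr rfl fun k _ => ?_
    rw [_root_.smul_apply, norm_smul, Real.norm_of_nonneg hc,
      Real.mul_rpow hc (norm_nonneg _)]
  have hSpos : ∀ A : V →L[ℝ] V, A ≠ 0 → 0 < S A := by
    intro A hA
    rcases (hSnn A).lt_or_eq with h | h
    · exact h
    exfalso; apply hA
    have hz : ∀ k, A (φ k) = 0 := by
      intro k
      have := (Finset.sum_eq_zero_iff_of_nonneg (fun k _ => by positivity)).mp h.symm k
        (Finset.mem_univ k)
      rw [Real.rpow_eq_zero (norm_nonneg _) hq0.ne'] at this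
      exact norm_eq_zero.mp this
    ext v
    have hv : v ∈ Submodule.span ℝ (Set.range φ) := by rw [hs]; trivial
    induction hv using Submodule.span_induction with
    | mem x hx => obtain ⟨i, rfl⟩ := hx; simp [hz]
    | zero => simp
    | add x y _ _ hx hy => simp_all
    | smul a x _ hx => simp_all
  let K : Set (V →L[ℝ] V) := {A | S A ≤ d}
  have hKclosed : IsClosed K := isClosed_le hScont continuous_const
  have hKcomp : IsCompact K := by
    -- `S` is bounded below on the unit sphere
    have hKb : Bornology.IsBounded K := by
      have hsph : (Metric.sphere (0 : V →L[ℝ] V) 1).Nonempty := by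
        exact NormedSpace.sphere_nonempty.mpr zero_le_one
      obtain ⟨A0, hA0, hmin⟩ := (isCompact_sphere (0 : V →L[ℝ] V) 1).exists_isMinOn hsph
        hScont.continuousOn
      have hA0' : A0 ≠ 0 := by
        rintro rfl; simp at hA0
      have hp := hSpos A0 hA0'
      rw [Metric.isBounded_iff_subset_closedBall 0]
      refine ⟨(d / S A0) ^ (1/q), fun A hA => ?_⟩
      rw [mem_closedBall_zero_iff]
      by_cases hA00 : A = 0
      · rw [hA00, norm_zero]; positivity
      have hn : 0 < ‖A‖ := norm_pos_iff.mpr hA00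
      have h1 : S A0 ≤ S (‖A‖⁻¹ • A) := hmin (by simp [norm_smul, hn.ne'])
      rw [hSsmul _ _ (by positivity), Real.inv_rpow hn.le] at h1
      have hA : S A ≤ d := hA
      have hnq : 0 < ‖A‖ ^ q := by positivity
      rw [le_inv_mul_iff₀ hnq] at h1
      have h2 : ‖A‖ ^ q ≤ d / S A0 := by
        rw [le_div_iff₀ hp]; linarith
      calc ‖A‖ = (‖A‖ ^ q) ^ (1/q) := by
            rw [← Real.rpow_mul hn.le, mul_one_div_cancel hq0.ne', Real.rpow_one]
        _ ≤ _ := Real.rpow_le_rpow hnq.le h2 (by positivity)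
    exact Metric.isCompact_of_isClosed_isBounded hKclosed hKb
  have hdetsmul : ∀ (c : ℝ) (A : V →L[ℝ] V), (c • A).det = c ^ d * A.det := by
    intro c A
    simp only [ContinuousLinearMap.det, ContinuousLinearMap.toLinearMap_smul, LinearMap.det_smul, hd]
  -- normalising a map into K
  have hnorm : ∀ A : V →L[ℝ] V, A ≠ 0 → ((d / S A) ^ (1/q)) • A ∈ K := by
    intro A hA
    have hp := hSpos A hA
    change S _ ≤ d
    rw [hSsmul _ _ (by positivity), ← Real.rpow_mul (by positivity), one_div_mul_cancel hq0.ne',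
      Real.rpow_one, div_mul_cancel₀ _ hp.ne']
  have hid : (ContinuousLinearMap.id ℝ V) ≠ 0 := by
    intro h
    obtain ⟨v, hv⟩ := exists_ne (0 : V)
    exact hv (by simpa using congrArg (fun f : V →L[ℝ] V => f v) h)
  obtain ⟨A, hAK, hAmax⟩ := hKcomp.exists_isMaxOn ⟨_, hnorm _ hid⟩
    (ContinuousLinearMap.continuous_det (𝕜 := ℝ) (E := V)).continuousOn
  have hAdet : 0 < A.det := by
    have h1 := hAmax (hnorm _ hid)
    simp only [Set.mem_ofPred_eq] at h1
    rw [hdetsmul] at h1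
    have h2 : (ContinuousLinearMap.id ℝ V).det = 1 := by
      simp [ContinuousLinearMap.det]
    rw [h2, mul_one] at h1
    have := hSpos _ hid
    exact lt_of_lt_of_le (by positivity) h1
  have hdet_ne : ∀ B : V →L[ℝ] V, B.det ≠ 0 → B ≠ 0 := by
    rintro B hB rfl
    apply hB
    have := hdetsmul 0 0
    simpa [hd0.ne'] using this
  -- optimality
  have hopt : ∀ B : V →L[ℝ] V, 0 < B.det → (B.det) ^ (q / d) ≤ S (B.comp A) / d := by
    intro B hB
    have hdetc : (B.comp A).det = B.det * A.det := by
      simp [ContinuousLinearMap.det, LinearMap.det_comp]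
    have hne : B.comp A ≠ 0 := hdet_ne _ (by rw [hdetc]; positivity)
    have hp := hSpos _ hne
    have h1 := hAmax (hnorm _ hne)
    simp only [Set.mem_ofPred_eq] at h1
    rw [hdetsmul, hdetc, ← mul_assoc] at h1
    have h2 := le_of_mul_le_mul_right (h1.trans_eq (one_mul _).symm) hAdet
    have h3 : B.det ≤ (S (B.comp A) / d) ^ ((d:ℝ)/q) := by
      have e : ((d / S (B.comp A)) ^ (1/q)) ^ d = ((S (B.comp A) / d) ^ ((d:ℝ)/q))⁻¹ := by
        rw [← Real.rpow_natCast, ← Real.rpow_mul (by positivity), ← Real.inv_rpow (by positivity),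
          inv_div]
        congr 1; ring
      rw [e, inv_mul_le_iff₀ (by positivity), mul_one] at h2
      exact h2
    calc (B.det) ^ (q/d) ≤ ((S (B.comp A) / d) ^ ((d:ℝ)/q)) ^ (q/d) :=
          Real.rpow_le_rpow hB.le h3 (by positivity)
      _ = _ := by
          rw [← Real.rpow_mul (by positivity)]
          have : (d:ℝ)/q * (q/d) = 1 := by field_simp
          rw [this, Real.rpow_one]
  have hSA : S A = d := by
    apply le_antisymm hAK
    have := hopt (ContinuousLinearMap.id ℝ V) (by simp [ContinuousLinearMap.det])
    have h2 : (ContinuousLinearMap.id ℝ V).det = 1 := by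
      simp [ContinuousLinearMap.det]
    rw [h2, Real.one_rpow, ContinuousLinearMap.id_comp, le_div_iff₀ hdR, one_mul] at this
    exact this
  have hAker : LinearMap.ker (A : V →ₗ[ℝ] V) = ⊥ := by
    by_contra hk
    have := LinearMap.det_eq_zero_iff_ker_ne_bot.mpr hk
    exact hAdet.ne' this
  let E : V ≃ₗ[ℝ] V := LinearEquiv.ofInjectiveEndo (A : V →ₗ[ℝ] V) (LinearMap.ker_eq_bot.mp hAker)
  have hE : ∀ v, E v = A v := fun v => rfl
  refine ⟨E, ?_⟩
  simp only [hE]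
  set y : Fin N → V := fun k => A (φ k) with hy
  -- the operator
  let G : V →ₗ[ℝ] V := ∑ k, (‖y k‖ ^ (q-2)) • 
    ((innerₛₗ ℝ (y k) : V →ₗ[ℝ] ℝ).smulRight (y k))
  have hG : ∀ v, G v = ∑ k, (‖y k‖ ^ (q - 2) * inner ℝ (y k) v) • y k := by
    intro v
    simp [G, LinearMap.sum_apply, mul_smul]
  have hGin : ∀ v w, inner ℝ (G v) w = ∑ k, ‖y k‖ ^ (q-2) * inner ℝ (y k) v * inner ℝ (y k) w := by
    intro v w
    rw [hG, sum_inner]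
    refine Finset.sum_congr rfl fun k _ => ?_
    rw [real_inner_smul_left]
  -- unit vectors
  have hunit : ∀ v, ‖v‖ = 1 → inner ℝ (G v) v = 1 := by
    intro v hv
    set s : ℝ := inner ℝ (G v) v with hsdef
    have key : ∀ t : ℝ, -1 < t → (1+t)^(q/d) ≤ 1 + (q/(2*d))*(2*t+t^2)*s := by
      intro t ht
      let B : V →L[ℝ] V := LinearMap.toContinuousLinearMap
        (LinearMap.transvection (innerₛₗ ℝ v : V →ₗ[ℝ] ℝ) (t • v))
      have hBd : B.det = 1 + t := by
        have : B.det = LinearMap.det (LinearMap.transvection (innerₛₗ ℝ v : V →ₗ[ℝ] ℝ) (t • v)) := rfl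
        rw [this, LinearMap.transvection.det]
        simp [hv]
      have hBa : ∀ z, B z = z + (inner ℝ v z) • (t • v) := fun z => rfl
      have h1 := hopt B (by rw [hBd]; linarith)
      rw [hBd] at h1
      refine h1.trans ?_
      rw [div_le_iff₀ hdR]
      have h2 : ∀ k, ‖B (y k)‖ ^ q ≤ ‖y k‖ ^ q + (q/2)*(2*t+t^2) *
          (‖y k‖ ^ (q-2) * inner ℝ (y k) v * inner ℝ (y k) v) := by
        intro k
        by_cases hk : y k = 0
        · simp [hk, Real.zero_rpow hq0.ne']
        have hyp : 0 < ‖y k‖ := norm_pos_iff.mpr hk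
        set c : ℝ := inner ℝ (y k) v with hc
        have hB2 : ‖B (y k)‖ ^ 2 = ‖y k‖^2 * (1 + (2*t+t^2) * (c^2/‖y k‖^2)) := by
          rw [hBa, norm_add_sq_real, smul_smul, norm_smul, inner_smul_right, real_inner_comm (y k) v,
            ← hc, hv, mul_one, Real.norm_eq_abs, sq_abs]
          field_simp; ring
        have hge : -1 ≤ (2*t+t^2) * (c^2/‖y k‖^2) := by
          have : 0 ≤ ‖B (y k)‖ ^ 2 := by positivity
          rw [hB2] at this
          have := nonneg_of_mul_nonneg_right this (by positivity)
          linarith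
        have hb := rpow_one_add_le_one_add_mul_self hge (p := q/2) (by positivity) (by linarith)
        have e1 : ‖B (y k)‖ ^ q = (‖B (y k)‖ ^ 2) ^ (q/2) := by
          rw [← Real.rpow_natCast, ← Real.rpow_mul (norm_nonneg _)]; congr 1; push_cast; ring
        have e2 : ‖y k‖ ^ q = (‖y k‖ ^ 2) ^ (q/2) := by
          rw [← Real.rpow_natCast, ← Real.rpow_mul (norm_nonneg _)]; congr 1; push_cast; ring
        have e3 : ‖y k‖ ^ (q-2) = ‖y k‖ ^ q / ‖y k‖^2 := by
          rw [Real.rpow_sub hyp]; norm_num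
        rw [e1, hB2, Real.mul_rpow (by positivity) (by linarith), ← e2, e3]
        have := mul_le_mul_of_nonneg_left hb (show 0 ≤ ‖y k‖ ^ q by positivity)
        refine this.trans (le_of_eq ?_)
        field_simp
      calc S (B.comp A) ≤ ∑ k, (‖y k‖ ^ q + (q/2)*(2*t+t^2) *
          (‖y k‖ ^ (q-2) * inner ℝ (y k) v * inner ℝ (y k) v)) :=
            Finset.sum_le_sum fun k _ => h2 k
        _ = d + (q/2)*(2*t+t^2)*s := by
            rw [Finset.sum_add_distrib, ← Finset.mul_sum, hsdef, hGin]
            congr 1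
        _ = _ := by field_simp
    let g : ℝ → ℝ := fun t => 1 + (q/(2*d))*(2*t+t^2)*s - (1+t)^(q/d)
    have hg0 : IsLocalMin g 0 := by
      have : ∀ᶠ t in nhds (0:ℝ), -1 < t := eventually_gt_nhds (by norm_num)
      filter_upwards [this] with t ht
      have := key t ht
      simp only [g]; norm_num; linarith
    have hgd : HasDerivAt g ((q/(2*d))*(2*1+2*0)*s - q/d) 0 := by
      have h1 : HasDerivAt (fun t : ℝ => (1+t)^(q/d)) (q/d) 0 := by
        have := ((hasDerivAt_id (0:ℝ)).const_add 1).rpow_const (p := q/d) (Or.inl (by norm_num))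
        simpa using this
      have h2 : HasDerivAt (fun t : ℝ => 2*t+t^2) (2*1+2*0) 0 := by
        have := ((hasDerivAt_id (0:ℝ)).const_mul 2).add ((hasDerivAt_id (0:ℝ)).pow 2)
        have e : (fun t : ℝ => 2*t+t^2) = (fun y : ℝ => 2 * id y) + id ^ 2 := by
          funext t; simp
        rw [e]
        exact this.congr_deriv (by simp)
      exact (((h2.const_mul (q/(2*d))).mul_const s).const_add 1).sub h1
    have h0 := hg0.hasDerivAt_eq_zero hgd
    field_simp at h0
    nlinarith [h0]
  have hquad : ∀ v, inner ℝ (G v) v = ‖v‖^2 := by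
    intro v
    by_cases hv : v = 0
    · simp [hv]
    have hn : ‖v‖ ≠ 0 := norm_ne_zero_iff.mpr hv
    have := hunit (‖v‖⁻¹ • v) (by simp [norm_smul, hn])
    rw [map_smul, real_inner_smul_left, real_inner_smul_right] at this
    field_simp at this
    linarith
  have hsym : (G - LinearMap.id : V →ₗ[ℝ] V).IsSymmetric := by
    intro v w
    rw [LinearMap.sub_apply, LinearMap.sub_apply, inner_sub_left, inner_sub_right, hGin,
      real_inner_comm (G w) v, hGin]
    simp only [LinearMap.id_apply]
    congr 1
    exact Finset.sum_congr rfl fun k _ => by ring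
  have hz := hsym.inner_map_self_eq_zero.mp (fun v => by
    rw [LinearMap.sub_apply, inner_sub_left, hquad]; simp)
  intro v
  rw [← hG]
  have := congrArg (fun f : V →ₗ[ℝ] V => f v) hz
  simpa [sub_eq_zero] using this
theorem dtrick {V Y : Type*} [NormedAddCommGroup V] [InnerProductSpace ℝ V] [FiniteDimensional ℝ V]
    [NormedAddCommGroup Y] [NormedSpace ℝ Y] (L : V →ₗ[ℝ] Y) (d : ℕ)
    (hd : d = Module.finrank ℝ V) (h : Fin d → V) (ho : Orthonormal ℝ h)
    (hh : ∀ (j : Fin d) (v : V), (∀ i, i < j → inner ℝ (h i) v = 0) → ‖L v‖ ≤ ‖L (h j)‖ * ‖v‖)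
    (r P : ℝ) (hr : 2 ≤ r) (hP : 0 ≤ P)
    (ha : ∀ j : Fin d, ‖L (h j)‖ ≤ ((j:ℝ)+1)^(1/r-1/2) * P) (v : V) :
    ‖L v‖^2 ≤ (2*r*(d:ℝ)^(1/(2*r))*P)^2 *
      ∑ l : Fin d, ((l:ℝ)+1)^(1/r-1) * (inner ℝ (h l) v)^2 := by
  classical
  have hr0 : 0 < r := by linarith
  set α : ℝ := 1/2 - 1/(2*r) with hα
  let c : Fin d → ℝ := fun k => ((k:ℝ)+1)^(α-1)
  let D : Fin d → ℝ := fun l => ∑ k : Fin d, if k ≤ l then c k else 0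
  have hcpos : ∀ k, 0 < c k := fun k => by simp only [c]; positivity
  have hα1 : α - 1 ≤ 0 := by
    have : 0 < 1/(2*r) := by positivity
    rw [hα]; linarith
  have hDge : ∀ l : Fin d, ((l:ℝ)+1)^α ≤ D l := by
    intro l
    have h1 : ∑ k : Fin d, (if k ≤ l then c l else 0) ≤ D l := by
      refine Finset.sum_le_sum fun k _ => ?_
      split_ifs with hk
      · simp only [c]
        refine Real.rpow_le_rpow_of_nonpos (by positivity) ?_ hα1
        have : (k:ℕ) ≤ l := hk
        have : ((k:ℕ):ℝ) ≤ (l:ℕ) := by exact_mod_cast this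
        linarith
      · exact le_rfl
    refine le_trans (le_of_eq ?_) h1
    rw [← Finset.sum_filter, Finset.sum_const]
    have : (Finset.univ.filter fun k : Fin d => k ≤ l) = Finset.Iic l := by ext; simp
    rw [this, Fin.card_Iic]
    simp only [c, nsmul_eq_mul]
    rw [Real.rpow_sub_one (by positivity)]
    push_cast
    field_simp
  have hDpos : ∀ l, 0 < D l := fun l => lt_of_lt_of_le (by positivity) (hDge l)
  let ζ : Fin d → ℝ := fun l => inner ℝ (h l) v / D l
  let u : Fin d → V := fun k => ∑ l : Fin d, (if k ≤ l then ζ l else 0) • h l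
  have hv : v = ∑ l, (inner ℝ (h l) v : ℝ) • h l := by
    let b : OrthonormalBasis (Fin d) ℝ V := OrthonormalBasis.mk ho (by
      rw [LinearIndependent.span_eq_top_of_card_eq_finrank' ho.linearIndependent (by simp [hd])])
    have hb : ⇑b = h := OrthonormalBasis.coe_mk _ _
    have := b.sum_repr' v
    rw [hb] at this
    exact this.symm
  have hvu : v = ∑ k, c k • u k := by
    conv_lhs => rw [hv]
    simp only [u, Finset.smul_sum, smul_smul]
    rw [Finset.sum_comm]
    refine Finset.sum_congr rfl fun l _ => ?_
    rw [← Finset.sum_smul]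
    congr 1
    have : ∀ k, c k * (if k ≤ l then ζ l else 0) = (if k ≤ l then c k else 0) * ζ l := by
      intro k; split_ifs <;> simp
    simp only [this]
    rw [← Finset.sum_mul]
    change _ = D l * (inner ℝ (h l) v / D l)
    field_simp [(hDpos l).ne']
  have hnormsum : ∀ a : Fin d → ℝ, ‖∑ l, a l • h l‖^2 = ∑ l, a l^2 := by
    intro a
    rw [← real_inner_self_eq_norm_sq, ho.inner_sum]
    exact Finset.sum_congr rfl fun l _ => by simp [sq]
  set Z : ℝ := Real.sqrt (∑ l, ζ l ^2) with hZ
  have hZ2 : Z^2 = ∑ l, ζ l^2 := Real.sq_sqrt (Finset.sum_nonneg fun _ _ => sq_nonneg _)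
  have hu : ∀ k, ‖u k‖ ≤ Z := by
    intro k
    apply le_of_sq_le_sq _ (Real.sqrt_nonneg _)
    rw [hZ2, hnormsum]
    refine Finset.sum_le_sum fun l _ => ?_
    split_ifs
    · exact le_rfl
    · simpa using sq_nonneg (ζ l)
  have hLu : ∀ k, ‖L (u k)‖ ≤ ((k:ℝ)+1)^(1/r-1/2) * P * Z := by
    intro k
    have h1 := hh k (u k) (by
      intro i hi
      rw [ho.inner_right_fintype]
      simp [not_le.mpr hi])
    refine h1.trans ?_
    exact mul_le_mul (ha k) (hu k) (norm_nonneg _) (by positivity)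
  have hZnn : 0 ≤ Z := Real.sqrt_nonneg _
  have hLv : ‖L v‖ ≤ 2*r*(d:ℝ)^(1/(2*r))*P * Z := by
    conv_lhs => rw [hvu]
    rw [map_sum]
    calc ‖∑ k, L (c k • u k)‖ ≤ ∑ k, ‖L (c k • u k)‖ := norm_sum_le _ _
      _ ≤ ∑ k : Fin d, ((k:ℝ)+1)^(1/(2*r)-1) * (P * Z) := by
          refine Finset.sum_le_sum fun k _ => ?_
          rw [map_smul, norm_smul, Real.norm_of_nonneg (hcpos k).le]
          calc c k * ‖L (u k)‖ ≤ c k * (((k:ℝ)+1)^(1/r-1/2) * P * Z) :=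
                mul_le_mul_of_nonneg_left (hLu k) (hcpos k).le
            _ = (((k:ℝ)+1)^(α-1) * ((k:ℝ)+1)^(1/r-1/2)) * (P * Z) := by simp only [c]; ring
            _ = _ := by
                rw [← Real.rpow_add (by positivity)]
                congr 2
                rw [hα]; field_simp; ring
      _ = (∑ k ∈ Finset.range d, ((k:ℝ)+1)^(1/(2*r)-1)) * (P * Z) := by
          rw [← Finset.sum_mul, Finset.sum_range]
      _ ≤ ((d:ℝ)^(1/(2*r)) / (1/(2*r))) * (P * Z) := by
          refine mul_le_mul_of_nonneg_right (sum_rpow_le _ (by positivity) ?_ d) (by positivity)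
          rw [div_le_one (by positivity)]; linarith
      _ = _ := by field_simp
  calc ‖L v‖^2 ≤ (2*r*(d:ℝ)^(1/(2*r))*P * Z)^2 := pow_le_pow_left₀ (norm_nonneg _) hLv 2
    _ = (2*r*(d:ℝ)^(1/(2*r))*P)^2 * ∑ l, ζ l^2 := by rw [mul_pow, hZ2]
    _ ≤ _ := by
      refine mul_le_mul_of_nonneg_left (Finset.sum_le_sum fun l _ => ?_) (sq_nonneg _)
      simp only [ζ]
      rw [div_pow, div_eq_inv_mul]
      refine mul_le_mul_of_nonneg_right ?_ (sq_nonneg _)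
      have e : ((l:ℝ)+1)^(1/r-1) = ((((l:ℝ)+1)^α)^2)⁻¹ := by
        rw [← Real.rpow_natCast, ← Real.rpow_mul (by positivity), ← Real.rpow_neg (by positivity)]
        congr 1; rw [hα]; push_cast; field_simp; ring
      rw [e]
      exact inv_anti₀ (by positivity) (pow_le_pow_left₀ (by positivity) (hDge l) 2)

/-- sum of squares over a tight frame -/
theorem frame_bound {V Y : Type*} [NormedAddCommGroup V] [InnerProductSpace ℝ V] [FiniteDimensional ℝ V]
    [NormedAddCommGroup Y] [NormedSpace ℝ Y] (L : V →ₗ[ℝ] Y) (d : ℕ)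
    (hd : d = Module.finrank ℝ V) (h : Fin d → V) (ho : Orthonormal ℝ h)
    (hh : ∀ (j : Fin d) (v : V), (∀ i, i < j → inner ℝ (h i) v = 0) → ‖L v‖ ≤ ‖L (h j)‖ * ‖v‖)
    (r P : ℝ) (hr : 2 ≤ r) (hP : 0 ≤ P)
    (ha : ∀ j : Fin d, ‖L (h j)‖ ≤ ((j:ℝ)+1)^(1/r-1/2) * P)
    {N : ℕ} (y : Fin N → V) (w : Fin N → ℝ) (hw : ∀ k, 0 ≤ w k)
    (hf : ∀ v : V, ∑ k, w k * (inner ℝ (y k) v)^2 = ‖v‖^2) :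
    ∑ k, w k * ‖L (y k)‖^2 ≤ 4*r^3*(d:ℝ)^(2/r)*P^2 := by
  have hr0 : 0 < r := by linarith
  set C : ℝ := (2*r*(d:ℝ)^(1/(2*r))*P)^2 with hC
  calc ∑ k, w k * ‖L (y k)‖^2 ≤ ∑ k, w k * (C *
      ∑ l : Fin d, ((l:ℝ)+1)^(1/r-1) * (inner ℝ (h l) (y k))^2) :=
        Finset.sum_le_sum fun k _ => mul_le_mul_of_nonneg_left
          (dtrick L d hd h ho hh r P hr hP ha (y k)) (hw k)
    _ = C * ∑ l : Fin d, ((l:ℝ)+1)^(1/r-1) * ∑ k, w k * (inner ℝ (y k) (h l))^2 := by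
        simp only [Finset.mul_sum]
        rw [Finset.sum_comm]
        refine Finset.sum_congr rfl fun l _ => Finset.sum_congr rfl fun k _ => ?_
        rw [real_inner_comm (y k) (h l)]; ring
    _ = C * ∑ l : Fin d, ((l:ℝ)+1)^(1/r-1) := by
        congr 1
        refine Finset.sum_congr rfl fun l _ => ?_
        rw [hf, ho.1 l]; simp
    _ ≤ C * ((d:ℝ)^(1/r) / (1/r)) := by
        refine mul_le_mul_of_nonneg_left ?_ (sq_nonneg _)
        have := sum_rpow_le (1/r) (by positivity) (by rw [div_le_one hr0]; linarith) d
        rwa [Finset.sum_range] at this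
    _ = _ := by
        rw [hC]
        have e1 : ((d:ℝ)^(1/(2*r)))^2 = (d:ℝ)^(1/r) := by
          rw [← Real.rpow_natCast, ← Real.rpow_mul (by positivity)]
          congr 1; push_cast; field_simp
        have e2 : (d:ℝ)^(2/r) = (d:ℝ)^(1/r) * (d:ℝ)^(1/r) := by
          rw [← Real.rpow_add_of_nonneg (by positivity) (by positivity) (by positivity)]
          congr 1; ring
        rw [mul_pow, mul_pow, e1, e2]
        field_simp; ring

theorem wholder {ι : Type*} (s : Finset ι) (q : ℝ) (hq1 : 1 ≤ q) (hq2 : q ≤ 2) (w b : ι → ℝ)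
    (hw : ∀ i, 0 ≤ w i) (hb : ∀ i, 0 ≤ b i) :
    ∑ i ∈ s, w i * b i ^ q ≤ (∑ i ∈ s, w i) ^ (1 - q/2) * (∑ i ∈ s, w i * b i ^ 2) ^ (q/2) := by
  have hq0 : 0 < q := by linarith
  have h := Real.inner_le_weight_mul_Lp_of_nonneg s (p := 2/q) (by rw [le_div_iff₀ hq0]; linarith)
    w (fun i => b i ^ q) hw (fun i => by have := hb i; positivity)
  rw [inv_div] at h
  refine h.trans (le_of_eq ?_)
  congr 2
  refine Finset.sum_congr rfl fun i _ => ?_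
  rw [← Real.rpow_mul (hb i), mul_div_cancel₀ _ hq0.ne', Real.rpow_two]

theorem young_pt (q Y c b : ℝ) (hq1 : 1 ≤ q) (hq2 : q ≤ 2) (hY : 0 < Y) (hc : 0 ≤ c) (hcY : c ≤ Y)
    (hb : 0 ≤ b) : Y^(q-2) * c * b ≤ (1/q) * b^q + (1-1/q) * (Y^(q-2) * c^2) := by
  have hq0 : 0 < q := by linarith
  have h1q : 1/q ≤ 1 := by rw [div_le_one hq0]; exact hq1
  have h := Real.geom_mean_le_arith_mean2_weighted (w₁ := 1/q) (w₂ := 1-1/q) (p₁ := b^q)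
    (p₂ := Y^(q-2)*c^2) (by positivity) (by linarith) (by positivity) (by positivity) (by ring)
  refine le_trans ?_ h
  rw [← Real.rpow_mul hb, mul_one_div_cancel hq0.ne', Real.rpow_one, mul_comm]
  refine mul_le_mul_of_nonneg_left ?_ hb
  rcases hc.eq_or_lt with rfl | hc
  · rw [mul_zero]; positivity
  rw [Real.mul_rpow (by positivity) (by positivity), ← Real.rpow_mul hY.le, ← Real.rpow_natCast c 2,
    ← Real.rpow_mul hc.le]
  have h2q : 0 ≤ 2/q - 1 := by
    rw [sub_nonneg, le_div_iff₀ hq0]; linarith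
  have e1 : c = c^(2/q-1) * c^(((2:ℕ):ℝ)*(1-1/q)) := by
    rw [← Real.rpow_add hc]
    have : 2/q-1 + ((2:ℕ):ℝ)*(1-1/q) = 1 := by push_cast; ring
    rw [this, Real.rpow_one]
  have e2 : Y^(q-2) * Y^(2/q-1) = Y^((q-2)*(1-1/q)) := by
    rw [← Real.rpow_add hY]
    congr 1; field_simp; ring
  calc Y^(q-2) * c = Y^(q-2) * (c^(2/q-1) * c^(((2:ℕ):ℝ)*(1-1/q))) := by rw [← e1]
    _ ≤ Y^(q-2) * (Y^(2/q-1) * c^(((2:ℕ):ℝ)*(1-1/q))) := by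
        have := Real.rpow_le_rpow hc.le hcY h2q
        gcongr
    _ = _ := by rw [← mul_assoc, e2]

theorem qsum_bound {X Y : Type*} [NormedAddCommGroup X] [NormedSpace ℝ X]
    [NormedAddCommGroup Y] [NormedSpace ℝ Y] (T : X →L[ℝ] Y) (n : ℕ) (hT : RankLE T n)
    (q r p P : ℝ) (hq1 : 1 ≤ q) (hq2 : q ≤ 2) (hr : 2 ≤ r) (hp : 0 < p) (hpq : 1/q = 1/p + 1/r)
    (hP : 0 ≤ P)
    (hfact : ∀ (k : ℕ), k ≤ n → ∀ (x : Fin k → X) (C : ℝ), 0 < C →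
      (∀ f : X →L[ℝ] ℝ, ‖f‖ ≤ 1 → ∑ i, |f (x i)| ^ q ≤ C ^ q) → ∑ i, ‖T (x i)‖ ^ p ≤ (C * P) ^ p)
    {N : ℕ} (x : Fin N → X) (hx : ∀ f : X →L[ℝ] ℝ, ‖f‖ ≤ 1 → ∑ i, |f (x i)| ^ q ≤ 1) :
    ∑ k, ‖T (x k)‖ ^ q ≤ (n:ℝ) ^ (1 - q/2) * (4*r^3*(n:ℝ)^(2/r)*P^2) ^ (q/2) := by
  have hq0 : 0 < q := by linarith
  have hr0 : 0 < r := by linarith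
  obtain ⟨hfin, hrank⟩ := hT
  let W : Submodule ℝ Y := Submodule.span ℝ (Set.range fun k => T (x k))
  have hWle : W ≤ LinearMap.range (T : X →ₗ[ℝ] Y) := by
    refine Submodule.span_le.mpr ?_
    rintro _ ⟨k, rfl⟩
    exact ⟨x k, rfl⟩
  have : FiniteDimensional ℝ W := FiniteDimensional.span_of_finite ℝ (Set.finite_range _)
  set d := Module.finrank ℝ W with hd
  have hdn : d ≤ n := (Submodule.finrank_mono hWle).trans hrank
  have hVd : d = Module.finrank ℝ (EuclideanSpace ℝ (Fin d)) := by simp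
  let e : W ≃ₗ[ℝ] (EuclideanSpace ℝ (Fin d)) := LinearEquiv.ofFinrankEq W (EuclideanSpace ℝ (Fin d)) (by rw [← hVd])
  let ξ : Fin N → W := fun k => ⟨T (x k), Submodule.subset_span ⟨k, rfl⟩⟩
  let φ : Fin N → (EuclideanSpace ℝ (Fin d)) := fun k => e (ξ k)
  have hs : Submodule.span ℝ (Set.range φ) = ⊤ := by
    have h1 : Submodule.span ℝ (Set.range ξ) = ⊤ := by
      have := Submodule.span_span_coe_preimage (R := ℝ) (s := Set.range fun k => T (x k))
      rw [← this]
      congr 1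
      ext z
      constructor
      · rintro ⟨k, rfl⟩; exact ⟨k, rfl⟩
      · rintro ⟨k, hk⟩; exact ⟨k, Subtype.ext hk⟩
    have h2 : Set.range φ = e '' Set.range ξ := by
      rw [← Set.range_comp]; rfl
    rw [h2]
    have := Submodule.map_span (e : W →ₗ[ℝ] (EuclideanSpace ℝ (Fin d))) (Set.range ξ)
    rw [h1] at this
    rw [LinearEquiv.coe_coe] at this
    rw [← this, Submodule.map_top, LinearEquiv.range]
  obtain ⟨A, hA⟩ := lewis q hq1 hq2 φ hs
  let y : Fin N → (EuclideanSpace ℝ (Fin d)) := fun k => A (φ k)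
  let L : (EuclideanSpace ℝ (Fin d)) →ₗ[ℝ] Y := W.subtype ∘ₗ (e.symm : (EuclideanSpace ℝ (Fin d)) →ₗ[ℝ] W) ∘ₗ (A.symm : (EuclideanSpace ℝ (Fin d)) →ₗ[ℝ] (EuclideanSpace ℝ (Fin d)))
  have hL : ∀ k, L (y k) = T (x k) := by intro k; simp [L, y, φ, ξ]
  let wt : Fin N → ℝ := fun k => ‖y k‖ ^ (q-2)
  have hwt : ∀ k, 0 ≤ wt k := fun k => by simp only [wt]; positivity
  have hA' : ∀ v : (EuclideanSpace ℝ (Fin d)), ∑ k, (wt k * inner ℝ (y k) v) • y k = v := hA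
  have hframe : ∀ v : (EuclideanSpace ℝ (Fin d)), ∑ k, wt k * (inner ℝ (y k) v)^2 = ‖v‖^2 := by
    intro v
    rw [← real_inner_self_eq_norm_sq]
    conv_rhs => rw [← hA' v]
    rw [sum_inner]
    conv_rhs => rw [hA' v]
    refine Finset.sum_congr rfl fun k _ => ?_
    rw [real_inner_smul_left]; ring
  obtain ⟨h, ho, hh⟩ := greedy L d hVd.le
  let ω : (EuclideanSpace ℝ (Fin d)) → X := fun v => ∑ k, (wt k * inner ℝ (y k) v) • x k
  have hTω : ∀ v, T (ω v) = L v := by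
    intro v
    conv_rhs => rw [← hA' v]
    simp only [ω, map_sum, map_smul, hL]
  have hfω1 : ∀ f : X →L[ℝ] ℝ, ‖f‖ ≤ 1 → ∀ v : (EuclideanSpace ℝ (Fin d)), ‖v‖ = 1 → f (ω v) ≤ 1 := by
    intro f hf v hv
    have h1q : 1/q ≤ 1 := by rw [div_le_one hq0]; exact hq1
    calc f (ω v) = ∑ k, wt k * inner ℝ (y k) v * f (x k) := by
          simp only [ω, map_sum, map_smul, smul_eq_mul]
      _ ≤ ∑ k, ((1/q) * |f (x k)| ^ q + (1-1/q) * (wt k * (inner ℝ (y k) v)^2)) := by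
          refine Finset.sum_le_sum fun k _ => ?_
          by_cases hk : y k = 0
          · rw [hk]; simp; positivity
          have hyk : 0 < ‖y k‖ := norm_pos_iff.mpr hk
          have h1 := young_pt q ‖y k‖ |inner ℝ (y k) v| |f (x k)| hq1 hq2 hyk (abs_nonneg _)
            (by simpa [hv] using abs_real_inner_le_norm (y k) v) (abs_nonneg _)
          rw [sq_abs] at h1
          refine le_trans ?_ h1
          refine (le_abs_self _).trans (le_of_eq ?_)
          rw [abs_mul, abs_mul, abs_of_nonneg (hwt k)]
      _ = (1/q) * ∑ k, |f (x k)| ^ q + (1-1/q) * 1 := by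
          rw [Finset.sum_add_distrib, ← Finset.mul_sum, ← Finset.mul_sum, hframe, hv]; norm_num
      _ ≤ (1/q) * 1 + (1-1/q) * 1 := by
          have := hx f hf
          gcongr
      _ = 1 := by ring
  have hωsmul : ∀ (c : ℝ) v, ω (c • v) = c • ω v := by
    intro c v
    simp only [ω, Finset.smul_sum, smul_smul, inner_smul_right]
    exact Finset.sum_congr rfl fun k _ => by congr 1; ring
  have hωsum : ∀ (k : ℕ) (c : Fin k → ℝ) (v : Fin k → (EuclideanSpace ℝ (Fin d))), ω (∑ i, c i • v i) = ∑ i, c i • ω (v i) := by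
    intro k c v
    simp only [ω, inner_sum, inner_smul_right, Finset.smul_sum, smul_smul, Finset.mul_sum, Finset.sum_smul]
    rw [Finset.sum_comm]
    exact Finset.sum_congr rfl fun k _ => Finset.sum_congr rfl fun k _ => by congr 1; ring
  have hfω : ∀ f : X →L[ℝ] ℝ, ‖f‖ ≤ 1 → ∀ v : (EuclideanSpace ℝ (Fin d)), f (ω v) ≤ ‖v‖ := by
    intro f hf v
    by_cases hv : v = 0
    · simp [hv, ω]
    have hn : 0 < ‖v‖ := norm_pos_iff.mpr hv
    have := hfω1 f hf (‖v‖⁻¹ • v) (by simp [norm_smul, hn.ne'])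
    rw [hωsmul, map_smul, smul_eq_mul, inv_mul_le_iff₀ hn, mul_one] at this
    exact this
  have ha : ∀ j : Fin d, ‖L (h j)‖ ≤ ((j:ℝ)+1)^(1/r-1/2) * P := by
    intro j
    let κ : Fin (j+1) → Fin d := fun i => ⟨i, by omega⟩
    have hκ : Function.Injective κ := fun a b hab => by
      simpa [κ, Fin.ext_iff] using hab
    have hoκ : Orthonormal ℝ (h ∘ κ) := ho.comp κ hκ
    have hj0 : (0:ℝ) < (j:ℝ)+1 := by positivity
    have h1 := hfact (j+1) (by omega) (fun i => ω (h (κ i))) (((j:ℝ)+1)^(1/q-1/2)) (by positivity) (by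
      intro f hf
      have hsq : ∑ i, (f (ω (h (κ i))))^2 ≤ 1 := by
        set v : (EuclideanSpace ℝ (Fin d)) := ∑ i, (f (ω (h (κ i)))) • h (κ i) with hv
        have e1 : ‖v‖^2 = ∑ i, (f (ω (h (κ i))))^2 := by
          rw [← real_inner_self_eq_norm_sq, hv]
          have := hoκ.inner_sum (fun i => f (ω (h (κ i)))) (fun i => f (ω (h (κ i)))) Finset.univ
          refine Eq.trans this ?_
          exact Finset.sum_congr rfl fun i _ => by simp [sq]
        have e2 : f (ω v) = ∑ i, (f (ω (h (κ i))))^2 := by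
          rw [hv, hωsum, map_sum]
          exact Finset.sum_congr rfl fun i _ => by simp [sq]
        have h3 := hfω f hf v
        rw [e2, ← e1] at h3
        rw [← e1]
        nlinarith [norm_nonneg v]
      have h4 := wholder Finset.univ q hq1 hq2 (fun _ : Fin (j+1) => 1)
        (fun i => |f (ω (h (κ i)))|) (fun _ => zero_le_one) (fun _ => abs_nonneg _)
      simp only [one_mul, sq_abs, Finset.sum_const, Finset.card_univ, Fintype.card_fin, nsmul_eq_mul,
        mul_one] at h4
      push_cast at h4
      refine h4.trans ?_
      have h5 : (∑ i, (f (ω (h (κ i))))^2) ^ (q/2) ≤ 1 :=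
        Real.rpow_le_one (Finset.sum_nonneg fun _ _ => sq_nonneg _) hsq (by positivity)
      rw [← Real.rpow_mul hj0.le]
      have e3 : (1/q-1/2)*q = 1 - q/2 := by field_simp
      rw [e3]
      exact mul_le_of_le_one_right (by positivity) h5)
    have h2 : ((j:ℝ)+1) * ‖L (h j)‖ ^ p ≤ (((j:ℝ)+1)^(1/q-1/2) * P)^p := by
      refine le_trans ?_ h1
      have : ∑ i : Fin (j+1), ‖L (h j)‖ ^ p = ((j:ℝ)+1) * ‖L (h j)‖ ^ p := by
        simp
      rw [← this]
      refine Finset.sum_le_sum fun i _ => ?_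
      rw [hTω]
      refine Real.rpow_le_rpow (norm_nonneg _) ?_ hp.le
      have := hh (κ i) (h j) (by
        intro l hl
        apply ho.2
        intro hlj
        have h6 : (l:ℕ) < i := hl
        rw [hlj] at h6
        omega)
      rwa [ho.1 j, mul_one] at this
    have h3 : (((j:ℝ)+1)^(1/p) * ‖L (h j)‖)^p ≤ (((j:ℝ)+1)^(1/q-1/2) * P)^p := by
      rw [Real.mul_rpow (by positivity) (norm_nonneg _), ← Real.rpow_mul hj0.le,
        one_div_mul_cancel hp.ne', Real.rpow_one]
      exact h2
    have h4 := (Real.rpow_le_rpow_iff (by positivity) (by positivity) hp).mp h3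
    have e1 : ((j:ℝ)+1)^(1/q-1/2) = ((j:ℝ)+1)^(1/p) * ((j:ℝ)+1)^(1/r-1/2) := by
      rw [← Real.rpow_add hj0]; congr 1; rw [hpq]; ring
    rw [e1, mul_assoc] at h4
    exact le_of_mul_le_mul_left h4 (by positivity)
  have hF := frame_bound L d hVd h ho hh r P hr hP ha y wt hwt hframe
  have htr : ∑ k, ‖y k‖ ^ q = d := by
    have hb : ∀ v : (EuclideanSpace ℝ (Fin d)), ‖v‖^2 = ∑ l, (inner ℝ v (h l))^2 := by
      intro v
      let b : OrthonormalBasis (Fin d) ℝ (EuclideanSpace ℝ (Fin d)) := OrthonormalBasis.mk ho (by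
        rw [LinearIndependent.span_eq_top_of_card_eq_finrank' ho.linearIndependent
          (by rw [Fintype.card_fin]; exact hVd)])
      have hb : ⇑b = h := OrthonormalBasis.coe_mk _ _
      have := b.sum_sq_inner_left v
      rw [hb] at this
      exact this.symm
    have e1 : ∀ k, ‖y k‖ ^ q = wt k * ‖y k‖^2 := by
      intro k
      by_cases hk : ‖y k‖ = 0
      · simp [hk, Real.zero_rpow hq0.ne']
      have hyk : 0 < ‖y k‖ := lt_of_le_of_ne (norm_nonneg _) (Ne.symm hk)
      simp only [wt]
      rw [Real.rpow_sub hyk]; norm_num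
      field_simp
    calc ∑ k, ‖y k‖ ^ q = ∑ k, ∑ l, wt k * (inner ℝ (y k) (h l))^2 := by
          refine Finset.sum_congr rfl fun k _ => ?_
          rw [e1, hb, Finset.mul_sum]
      _ = ∑ l : Fin d, (1:ℝ) := by
          rw [Finset.sum_comm]
          refine Finset.sum_congr rfl fun l _ => ?_
          rw [hframe, ho.1 l]; norm_num
      _ = d := by simp
  have hH := wholder Finset.univ q hq1 hq2 (fun k => ‖y k‖ ^ q) (fun k => ‖L (y k)‖ / ‖y k‖)
    (fun k => by positivity) (fun k => by positivity)
  have hl : ∀ k, ‖y k‖ ^ q * (‖L (y k)‖ / ‖y k‖) ^ q = ‖T (x k)‖ ^ q := by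
    intro k
    rw [← hL]
    by_cases hk : y k = 0
    · simp [hk, Real.zero_rpow hq0.ne']
    have hyk : 0 < ‖y k‖ := norm_pos_iff.mpr hk
    rw [← Real.mul_rpow (by positivity) (by positivity), mul_div_cancel₀ _ hyk.ne']
  have hr' : ∀ k, ‖y k‖ ^ q * (‖L (y k)‖ / ‖y k‖) ^ 2 = wt k * ‖L (y k)‖^2 := by
    intro k
    by_cases hk : y k = 0
    · simp [hk]
    have hyk : 0 < ‖y k‖ := norm_pos_iff.mpr hk
    simp only [wt]
    rw [Real.rpow_sub hyk]; norm_num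
    field_simp
  simp only [hl, hr', htr] at hH
  refine hH.trans ?_
  have hdn' : (d:ℝ) ≤ n := by exact_mod_cast hdn
  have hdd : (0:ℝ) ≤ d := by positivity
  refine mul_le_mul (Real.rpow_le_rpow hdd hdn' (by linarith)) ?_ ?_ (by positivity)
  · refine Real.rpow_le_rpow (Finset.sum_nonneg fun k _ => mul_nonneg (hwt k) (sq_nonneg _)) ?_
      (by positivity)
    refine hF.trans ?_
    have := Real.rpow_le_rpow hdd hdn' (show 0 ≤ 2/r by positivity)
    gcongr
  · exact Real.rpow_nonneg (Finset.sum_nonneg fun k _ => mul_nonneg (hwt k) (sq_nonneg _)) _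

theorem eSum_real (q : ℝ) (hq : 0 < q) {ι : Type*} [Fintype ι] (b : ι → ℝ) (hb : ∀ i, 0 ≤ b i) :
    eSum (ENNReal.ofReal q) (fun k => ENNReal.ofReal (b k)) =
      ENNReal.ofReal ((∑ i, b i ^ q) ^ (1/q)) := by
  unfold eSum
  rw [if_neg ENNReal.ofReal_ne_top, ENNReal.toReal_ofReal hq.le]
  have h1 : ∀ i, ENNReal.ofReal (b i) ^ q = ENNReal.ofReal (b i ^ q) := fun i =>
    ENNReal.ofReal_rpow_of_nonneg (hb i) hq.le
  have hnn : ∀ i ∈ (Finset.univ : Finset ι), 0 ≤ b i ^ q := fun i _ => Real.rpow_nonneg (hb i) _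
  simp only [h1]
  rw [← ENNReal.ofReal_sum_of_nonneg hnn, ENNReal.ofReal_rpow_of_nonneg (Finset.sum_nonneg hnn)
    (by positivity)]

theorem weak_iff (q : ℝ) (hq : 0 < q) {X : Type*} [NormedAddCommGroup X] [NormedSpace ℝ X]
    {n : ℕ} (x : Fin n → X) : weakLq (ENNReal.ofReal q) x ≤ 1 ↔
      ∀ f : X →L[ℝ] ℝ, ‖f‖ ≤ 1 → ∑ i, |f (x i)| ^ q ≤ 1 := by
  unfold weakLq
  rw [iSup_le_iff, Subtype.forall]
  refine forall_congr' fun f => forall_congr' fun hf => ?_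
  rw [eSum_real q hq _ (fun _ => abs_nonneg _), ENNReal.ofReal_le_one]
  have hnn : 0 ≤ ∑ i, |f (x i)| ^ q := Finset.sum_nonneg fun i _ => by positivity
  constructor
  · intro h
    by_contra hc
    push Not at hc
    exact absurd h (not_le.mpr (Real.one_lt_rpow hc (by positivity)))
  · intro h
    exact Real.rpow_le_one hnn h (by positivity)

theorem fact_piN {X Y : Type*} [NormedAddCommGroup X] [NormedSpace ℝ X]
    [NormedAddCommGroup Y] [NormedSpace ℝ Y] (T : X →L[ℝ] Y) (p q : ℝ) (hp : 0 < p) (hq : 0 < q)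
    (m : ℕ) (hfin : piN (ENNReal.ofReal p) (ENNReal.ofReal q) m T ≠ ∞)
    (k : ℕ) (hk : k ≤ m) (x : Fin k → X) (C : ℝ) (hC : 0 < C)
    (hx : ∀ f : X →L[ℝ] ℝ, ‖f‖ ≤ 1 → ∑ i, |f (x i)| ^ q ≤ C ^ q) :
    ∑ i, ‖T (x i)‖ ^ p ≤ (C * (piN (ENNReal.ofReal p) (ENNReal.ofReal q) m T).toReal) ^ p := by
  obtain ⟨l, rfl⟩ := Nat.exists_eq_add_of_le hk
  set P := (piN (ENNReal.ofReal p) (ENNReal.ofReal q) (k+l) T).toReal with hP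
  have hP0 : 0 ≤ P := ENNReal.toReal_nonneg
  let x' : Fin (k+l) → X := Fin.append (fun i => C⁻¹ • x i) (fun _ => 0)
  have hw : weakLq (ENNReal.ofReal q) x' ≤ 1 := by
    rw [weak_iff q hq]
    intro f hf
    rw [Fin.sum_univ_add]
    simp only [x', Fin.append_left, Fin.append_right, map_zero, abs_zero, Real.zero_rpow hq.ne',
      Finset.sum_const_zero, add_zero, map_smul, smul_eq_mul, abs_mul]
    have : ∀ i, (|C⁻¹| * |f (x i)|) ^ q = (C ^ q)⁻¹ * |f (x i)| ^ q := by
      intro i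
      rw [abs_of_pos (by positivity), Real.mul_rpow (by positivity) (abs_nonneg _),
        Real.inv_rpow hC.le]
    simp only [this]
    rw [← Finset.mul_sum, inv_mul_le_iff₀ (by positivity), mul_one]
    exact hx f hf
  have h1 : eSum (ENNReal.ofReal p) (fun i => ENNReal.ofReal ‖T (x' i)‖) ≤
      piN (ENNReal.ofReal p) (ENNReal.ofReal q) (k+l) T :=
    le_iSup (fun x : {x : Fin (k+l) → X // weakLq (ENNReal.ofReal q) x ≤ 1} =>
      eSum (ENNReal.ofReal p) fun i => ENNReal.ofReal ‖T (x.1 i)‖) ⟨x', hw⟩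
  rw [eSum_real p hp _ (fun _ => norm_nonneg _), ENNReal.ofReal_le_iff_le_toReal hfin, ← hP,
    Fin.sum_univ_add] at h1
  simp only [x', Fin.append_left, Fin.append_right, map_zero, norm_zero, Real.zero_rpow hp.ne',
      Finset.sum_const_zero, add_zero, map_smul, norm_smul] at h1
  have h2 : ∀ i, (‖C⁻¹‖ * ‖T (x i)‖) ^ p = (C ^ p)⁻¹ * ‖T (x i)‖ ^ p := by
    intro i
    rw [Real.norm_of_nonneg (by positivity), Real.mul_rpow (by positivity) (norm_nonneg _),
        Real.inv_rpow hC.le]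
  simp only [h2] at h1
  rw [← Finset.mul_sum] at h1
  have hnn : 0 ≤ ∑ i, ‖T (x i)‖ ^ p := Finset.sum_nonneg fun i _ => by positivity
  have h3 := Real.rpow_le_rpow (by positivity) h1 hp.le
  rw [← Real.rpow_mul (by positivity), one_div_mul_cancel hp.ne', Real.rpow_one,
    inv_mul_le_iff₀ (by positivity)] at h3
  rwa [Real.mul_rpow hC.le hP0]

theorem top_set {N : ℕ} (a : Fin N → ℝ) (m : ℕ) (hm : m ≤ N) :
    ∃ S : Finset (Fin N), S.card = m ∧ ∀ i ∈ S, ∀ j, j ∉ S → a j ≤ a i := by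
  classical
  induction m with
  | zero => exact ⟨∅, by simp⟩
  | succ m ih =>
    obtain ⟨S, hS, h⟩ := ih (by omega)
    have hne : (Sᶜ).Nonempty := by
      rw [← Finset.card_pos, Finset.card_compl, Fintype.card_fin]; omega
    obtain ⟨z, hz, hmax⟩ := Finset.exists_max_image Sᶜ a hne
    have hzS : z ∉ S := by simpa using hz
    refine ⟨insert z S, by rw [Finset.card_insert_of_notMem hzS, hS], ?_⟩
    intro i hi j hj
    rw [Finset.mem_insert, not_or] at hj
    rcases Finset.mem_insert.mp hi with rfl | hi
    · exact hmax j (by simpa using hj.2)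
    · exact h i hi j hj.2

theorem core {X Y : Type*} [NormedAddCommGroup X] [NormedSpace ℝ X]
    [NormedAddCommGroup Y] [NormedSpace ℝ Y] (T : X →L[ℝ] Y) (n : ℕ) (hn : 0 < n) (hT : RankLE T n)
    (q r p P : ℝ) (hq1 : 1 ≤ q) (hq2 : q ≤ 2) (hr : 2 ≤ r) (hp : 0 < p) (hpq : 1/q = 1/p + 1/r)
    (hP : 0 ≤ P) (m : ℕ) (hm : m = ⌊(n : ℝ) ^ (1 + r * (1 / q - 1 / 2))⌋₊)
    (hfact : ∀ (k : ℕ), k ≤ m → ∀ (x : Fin k → X) (C : ℝ), 0 < C →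
      (∀ f : X →L[ℝ] ℝ, ‖f‖ ≤ 1 → ∑ i, |f (x i)| ^ q ≤ C ^ q) → ∑ i, ‖T (x i)‖ ^ p ≤ (C * P) ^ p)
    {N : ℕ} (x : Fin N → X) (hx : ∀ f : X →L[ℝ] ℝ, ‖f‖ ≤ 1 → ∑ i, |f (x i)| ^ q ≤ 1) :
    ∑ k, ‖T (x k)‖ ^ p ≤ (1 + 8*r^3) * P ^ p := by
  classical
  have hq0 : 0 < q := by linarith
  have hr0 : 0 < r := by linarith
  have hnR : (1:ℝ) ≤ n := by exact_mod_cast hn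
  have hn0 : (0:ℝ) < n := by linarith
  have hPp : 0 ≤ P ^ p := by positivity
  set ex : ℝ := 1 + r * (1 / q - 1 / 2) with hex
  have hex1 : 1 ≤ ex := by
    have : 1/2 ≤ 1/q := one_div_le_one_div_of_le hq0 hq2
    have : 0 ≤ r * (1/q-1/2) := mul_nonneg hr0.le (by linarith)
    linarith
  have hne : (n:ℝ) ≤ (n:ℝ)^ex := Real.self_le_rpow_of_one_le hnR hex1
  have hnm : n ≤ m := by
    rw [hm]; exact Nat.le_floor hne
  have hm0 : 0 < m := by omega
  have hmR : (1:ℝ) ≤ m := by exact_mod_cast hm0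
  have hmge : (n:ℝ)^ex / 2 ≤ m := by
    have := Nat.lt_floor_add_one ((n:ℝ)^ex)
    rw [← hm] at this
    linarith
  have hfact1 : ∀ (k : ℕ), k ≤ m → ∀ (x : Fin k → X), 
      (∀ f : X →L[ℝ] ℝ, ‖f‖ ≤ 1 → ∑ i, |f (x i)| ^ q ≤ 1) → ∑ i, ‖T (x i)‖ ^ p ≤ P ^ p := by
    intro k hk x hx
    have := hfact k hk x 1 one_pos (by simpa using hx)
    simpa using this
  by_cases hN : N ≤ m
  · refine (hfact1 N hN x hx).trans ?_
    have : 0 ≤ 8*r^3 * P^p := by positivity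
    linarith
  push Not at hN
  obtain ⟨S, hS, htop⟩ := top_set (fun k => ‖T (x k)‖) m hN.le
  have hSsum : ∀ g : Fin N → ℝ, ∑ i : Fin m, g (S.orderEmbOfFin hS i) = ∑ i ∈ S, g i := by
    intro g
    rw [← Finset.sum_image (f := g) (g := S.orderEmbOfFin hS)
      (fun a _ b _ h => (S.orderEmbOfFin hS).injective h)]
    congr 1
    ext z
    have := Finset.range_orderEmbOfFin S hS
    rw [Finset.mem_image]
    constructor
    · rintro ⟨i, _, rfl⟩; exact Finset.orderEmbOfFin_mem S hS i
    · intro hz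
      have : z ∈ Set.range (S.orderEmbOfFin hS) := by rw [this]; exact hz
      obtain ⟨i, hi⟩ := this
      exact ⟨i, Finset.mem_univ _, hi⟩
  have hhead : ∑ i ∈ S, ‖T (x i)‖ ^ p ≤ P ^ p := by
    have := hfact1 m le_rfl (fun i => x (S.orderEmbOfFin hS i)) (by
      intro f hf
      rw [hSsum (fun i => |f (x i)| ^ q)]
      refine le_trans ?_ (hx f hf)
      exact Finset.sum_le_sum_of_subset_of_nonneg (Finset.subset_univ _)
        (fun i _ _ => by positivity))
    rwa [hSsum (fun i => ‖T (x i)‖ ^ p)] at this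
  have hpt : ∀ j, j ∉ S → ‖T (x j)‖ ≤ P * (m:ℝ)^(-(1/p)) := by
    intro j hj
    have h1 : (m:ℝ) * ‖T (x j)‖ ^ p ≤ P ^ p := by
      refine le_trans ?_ hhead
      have : ∑ i ∈ S, ‖T (x j)‖ ^ p = (m:ℝ) * ‖T (x j)‖ ^ p := by
        rw [Finset.sum_const, hS, nsmul_eq_mul]
      rw [← this]
      exact Finset.sum_le_sum fun i hi =>
        Real.rpow_le_rpow (norm_nonneg _) (htop i hi j hj) hp.le
    have h2 : ((m:ℝ)^(1/p) * ‖T (x j)‖)^p ≤ P^p := by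
      rw [Real.mul_rpow (by positivity) (norm_nonneg _), ← Real.rpow_mul (by positivity),
        one_div_mul_cancel hp.ne', Real.rpow_one]
      exact h1
    have h3 := (Real.rpow_le_rpow_iff (by positivity) hP hp).mp h2
    rw [Real.rpow_neg (by positivity), ← div_eq_mul_inv, le_div_iff₀ (by positivity), mul_comm]
    exact h3
  have hA := qsum_bound T n hT q r p P hq1 hq2 hr hp hpq hP
    (fun k hk => hfact k (hk.trans hnm)) x hx
  have hpq' : q ≤ p := by
    have : 1/p ≤ 1/q := by
      have : 0 < 1/r := by positivity
      linarith
    exact (one_div_le_one_div hp hq0).mp this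
  have htail : ∑ j ∈ Sᶜ, ‖T (x j)‖ ^ p ≤ 8*r^3 * P^p := by
    calc ∑ j ∈ Sᶜ, ‖T (x j)‖ ^ p ≤ ∑ j ∈ Sᶜ, (P * (m:ℝ)^(-(1/p)))^(p-q) * ‖T (x j)‖ ^ q := by
          refine Finset.sum_le_sum fun j hj => ?_
          have hj : j ∉ S := by simpa using hj
          have : ‖T (x j)‖ ^ p = ‖T (x j)‖ ^ (p-q) * ‖T (x j)‖ ^ q := by
            rw [← Real.rpow_add_of_nonneg (norm_nonneg _) (by linarith) hq0.le]; congr 1; ring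
          rw [this]
          refine mul_le_mul_of_nonneg_right ?_ (by positivity)
          exact Real.rpow_le_rpow (norm_nonneg _) (hpt j hj) (by linarith)
      _ = (P * (m:ℝ)^(-(1/p)))^(p-q) * ∑ j ∈ Sᶜ, ‖T (x j)‖ ^ q := by rw [Finset.mul_sum]
      _ ≤ (P * (m:ℝ)^(-(1/p)))^(p-q) *
          ((n:ℝ) ^ (1 - q/2) * (4*r^3*(n:ℝ)^(2/r)*P^2) ^ (q/2)) := by
          refine mul_le_mul_of_nonneg_left ?_ (by positivity)
          refine le_trans ?_ hA
          exact Finset.sum_le_sum_of_subset_of_nonneg (Finset.subset_univ _)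
            (fun i _ _ => by positivity)
      _ = P^p * ((m:ℝ)^(-(q/r)) * (n:ℝ)^(ex*(q/r))) * (4*r^3)^(q/2) := by
          have e1 : (P * (m:ℝ)^(-(1/p)))^(p-q) = P^(p-q) * (m:ℝ)^(-(q/r)) := by
            rw [Real.mul_rpow hP (by positivity), ← Real.rpow_mul (by positivity)]
            congr 2
            have : 1/r = 1/q - 1/p := by linarith
            have h' : q/r = q*(1/q-1/p) := by rw [← this]; ring
            rw [h']; field_simp
          have e2 : (4*r^3*(n:ℝ)^(2/r)*P^2) ^ (q/2) = (4*r^3)^(q/2) * (n:ℝ)^(q/r) * P^q := by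
            rw [Real.mul_rpow (by positivity) (by positivity),
              Real.mul_rpow (by positivity) (by positivity), ← Real.rpow_mul hn0.le,
              ← Real.rpow_natCast P 2, ← Real.rpow_mul hP]
            congr 2
            · congr 1; field_simp
            · push_cast; ring
          have e3 : (n:ℝ)^(ex*(q/r)) = (n:ℝ) ^ (1 - q/2) * (n:ℝ)^(q/r) := by
            rw [← Real.rpow_add hn0]
            congr 1; rw [hex]; field_simp; ring
          have e4 : P^p = P^(p-q) * P^q := by
            rw [← Real.rpow_add_of_nonneg hP (by linarith) hq0.le]; congr 1; ring
          rw [e1, e2, e3, e4]; ring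
      _ ≤ P^p * 2 * (4*r^3) := by
          have h1 : (m:ℝ)^(-(q/r)) * (n:ℝ)^(ex*(q/r)) ≤ 2 := by
            rw [Real.rpow_mul hn0.le, Real.rpow_neg (by positivity), inv_mul_le_iff₀ (by positivity)]
            have h2 : ((n:ℝ)^ex)^(q/r) ≤ (m * 2 : ℝ)^(q/r) :=
              Real.rpow_le_rpow (by positivity) (by linarith) (by positivity)
            rw [Real.mul_rpow (by positivity) (by norm_num)] at h2
            refine h2.trans (mul_le_mul_of_nonneg_left ?_ (by positivity))
            have : (2:ℝ)^(q/r) ≤ 2^(1:ℝ) := Real.rpow_le_rpow_of_exponent_le (by norm_num)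
              (by rw [div_le_one hr0]; linarith)
            simpa using this
          have h3 : (4*r^3)^(q/2) ≤ 4*r^3 := by
            have h4 : 1 ≤ 4*r^3 := by
              have : (1:ℝ) ≤ r^3 := one_le_pow₀ (by linarith)
              linarith
            calc (4*r^3)^(q/2) ≤ (4*r^3)^(1:ℝ) := Real.rpow_le_rpow_of_exponent_le h4 (by linarith)
              _ = _ := Real.rpow_one _
          gcongr
      _ = _ := by ring
  rw [← Finset.sum_add_sum_compl S]
  linarith

theorem const_bound (r : ℝ) (hr : 2 ≤ r) : 1 + 8*r^3 ≤ (3 * Real.exp 3) ^ r := by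
  have hr0 : 0 < r := by linarith
  have h1 : r^3 ≤ (Real.exp 3)^r := by
    rw [← Real.exp_mul]
    have : r ≤ Real.exp r := by linarith [Real.add_one_le_exp r]
    calc r^3 ≤ (Real.exp r)^3 := pow_le_pow_left₀ hr0.le this 3
      _ = _ := by rw [← Real.exp_nat_mul]; norm_num
  have h2 : (9:ℝ) ≤ 3^r := by
    calc (9:ℝ) = 3^(2:ℝ) := by norm_num
      _ ≤ _ := Real.rpow_le_rpow_of_exponent_le (by norm_num) hr
  rw [Real.mul_rpow (by norm_num) (by positivity)]
  have h3 : (1:ℝ) ≤ r^3 := one_le_pow₀ (by linarith)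
  calc 1 + 8*r^3 ≤ 9 * r^3 := by linarith
    _ ≤ _ := mul_le_mul h2 h1 (by positivity) (by positivity)

/-- for `1 ≤ q ≤ 2`, `2 ≤ r ≤ q'` (`q'` the conjugate exponent
of `q`) and `p` with `1/q = 1/p + 1/r`, there is an absolute constant `c₀` with
`π_{p,q}(T) ≤ c₀^{r/p} π_{p,q}^{⌊n^{1 + r(1/q - 1/2)}⌋}(T)` for every operator
`T` of rank at most `n`. -/
theorem statement12 :
    ∃ c₀ : ℝ, 0 < c₀ ∧
      ∀ (q r p : ℝ) (q' : ℝ≥0∞), 1 ≤ q → q ≤ 2 →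
        1 / ENNReal.ofReal q + 1 / q' = 1 → 2 ≤ r → ENNReal.ofReal r ≤ q' →
        1 / q = 1 / p + 1 / r →
        ∀ (X Y : Type*) [NormedAddCommGroup X] [NormedSpace ℝ X] [CompleteSpace X]
          [NormedAddCommGroup Y] [NormedSpace ℝ Y] [CompleteSpace Y]
          (n : ℕ) (T : X →L[ℝ] Y), RankLE T n →
          piPQ (ENNReal.ofReal p) (ENNReal.ofReal q) T ≤
            ENNReal.ofReal (c₀ ^ (r / p)) *
              piN (ENNReal.ofReal p) (ENNReal.ofReal q)
                (⌊(n : ℝ) ^ (1 + r * (1 / q - 1 / 2))⌋₊) T := by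
  refine ⟨3 * Real.exp 3, by positivity, ?_⟩
  intro q r p q' hq1 hq2 _ hr _ hpq X Y _ _ _ _ _ _ n T hT
  have hq0 : 0 < q := by linarith
  have hr0 : 0 < r := by linarith
  have hrq : 1/r ≤ 1/q := one_div_le_one_div_of_le hq0 (by linarith)
  have hp0 : 0 ≤ p := by
    have : 0 ≤ 1/p := by linarith
    exact one_div_nonneg.mp this
  have hzero : ∀ k : ℕ, weakLq (ENNReal.ofReal q) (fun _ : Fin k => (0:X)) ≤ 1 := by
    intro k
    rw [weak_iff q hq0]
    intro f _
    simp [Real.zero_rpow hq0.ne']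
  rcases hp0.eq_or_lt with rfl | hp
  · have h1 : ∀ (k : ℕ) (f : Fin k → ℝ≥0∞), eSum (ENNReal.ofReal 0) f = 1 := by
      intro k f
      unfold eSum
      simp
    rw [div_zero, Real.rpow_zero, ENNReal.ofReal_one, one_mul]
    have h2 : piPQ (ENNReal.ofReal 0) (ENNReal.ofReal q) T ≤ 1 := by
      unfold piPQ piN
      refine iSup_le fun k => iSup_le fun x => ?_
      rw [h1]
    refine h2.trans ?_
    unfold piN
    refine le_iSup_of_le ⟨_, hzero _⟩ ?_
    rw [h1]
  set m := ⌊(n : ℝ) ^ (1 + r * (1 / q - 1 / 2))⌋₊ with hm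
  have hc0 : 0 < (3 * Real.exp 3) ^ (r/p) := by positivity
  by_cases hfin : piN (ENNReal.ofReal p) (ENNReal.ofReal q) m T = ∞
  · rw [hfin, ENNReal.mul_top (by simpa using hc0)]
    exact le_top
  set P := (piN (ENNReal.ofReal p) (ENNReal.ofReal q) m T).toReal with hP
  have hP0 : 0 ≤ P := ENNReal.toReal_nonneg
  have hPe : piN (ENNReal.ofReal p) (ENNReal.ofReal q) m T = ENNReal.ofReal P :=
    (ENNReal.ofReal_toReal hfin).symm
  rw [hPe, ← ENNReal.ofReal_mul hc0.le]
  unfold piPQ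
  refine iSup_le fun N => ?_
  unfold piN
  refine iSup_le fun x => ?_
  rw [eSum_real p hp _ (fun _ => norm_nonneg _)]
  refine ENNReal.ofReal_le_ofReal ?_
  have hmain : ∑ k, ‖T (x.1 k)‖ ^ p ≤ (1 + 8*r^3) * P ^ p := by
    rcases Nat.eq_zero_or_pos n with rfl | hn
    · have hT0 : ∀ z, T z = 0 := by
        intro z
        have := hT.1
        have h0 : LinearMap.range (T : X →ₗ[ℝ] Y) = ⊥ :=
          Submodule.finrank_eq_zero.mp (Nat.le_zero.mp hT.2)
        have : T z ∈ LinearMap.range (T : X →ₗ[ℝ] Y) := ⟨z, rfl⟩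
        rw [h0] at this
        simpa using this
      simp only [hT0, norm_zero, Real.zero_rpow hp.ne', Finset.sum_const_zero]
      positivity
    · exact core T n hn hT q r p P hq1 hq2 hr hp hpq hP0 m hm
        (fact_piN T p q hp hq0 m hfin) x.1 ((weak_iff q hq0 x.1).mp x.2)
  have hnn : 0 ≤ ∑ k, ‖T (x.1 k)‖ ^ p := Finset.sum_nonneg fun i _ => by positivity
  calc (∑ k, ‖T (x.1 k)‖ ^ p) ^ (1/p) ≤ ((3 * Real.exp 3) ^ r * P ^ p) ^ (1/p) := by
        refine Real.rpow_le_rpow hnn (hmain.trans ?_) (by positivity)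
        exact mul_le_mul_of_nonneg_right (const_bound r hr) (by positivity)
    _ = _ := by
        rw [Real.mul_rpow (by positivity) (by positivity), ← Real.rpow_mul (by positivity),
          ← Real.rpow_mul hP0, mul_one_div_cancel hp.ne', Real.rpow_one, mul_one_div]

end
end
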